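/- Fix d ≥ 3 and assume E[Z²] < ∞. There exists C < ∞ such that for all R > 0, P^{−∞,∞}[ B(α((−∞,0))) ∩ B(α((R,∞))) ≠ ∅ ] ≤ C R^{−(d−8)/2}, where (α(n))_{n∈ℤ} is a two-sided simple random walk on ℤ^d started at 0. -/

import Mathlib

/-!
Common vocabulary: subgraphs of `ℤ^d` (traces of branching random walks), graph
distance, effective resistance (unit edge resistances, via the Dirichlet variational
principle), cut-bonds and cut-points; plane trees coded by finite words, branching
random walk embeddings, and the (discrete) laws of Galton–Watson trees written by
their elementary weights.
-/

noncomputable section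

open MeasureTheory Filter Topology Set

/-- Points of the lattice `ℤ^d`. -/
abbrev Zd (d : ℕ) := Fin d → ℤ

/-- A (sub)graph of `ℤ^d`, given by its vertex set and its (oriented) edge set. -/
structure LatticeGraph (d : ℕ) where
  verts : Set (Zd d)
  edges : Set (Zd d × Zd d)

namespace LatticeGraph

variable {d : ℕ}

/-- `G.IsPath m f a b` : `f` is a path of `m` steps from `a` to `b` using edges of `G`
(in either orientation). -/
def IsPath (G : LatticeGraph d) (m : ℕ) (f : ℕ → Zd d) (a b : Zd d) : Prop :=
  f 0 = a ∧ f m = b ∧ ∀ i < m, (f i, f (i + 1)) ∈ G.edges ∨ (f (i + 1), f i) ∈ G.edges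

def Connected (G : LatticeGraph d) (a b : Zd d) : Prop :=
  ∃ m f, G.IsPath m f a b

/-- Graph distance in `G` (junk value `0` if `a` and `b` are not connected). -/
noncomputable def dist (G : LatticeGraph d) (a b : Zd d) : ℕ :=
  sInf {m : ℕ | ∃ f, G.IsPath m f a b}

/-- Dirichlet energy of `h` on `G` (unit conductances). -/
noncomputable def energy (G : LatticeGraph d) (h : Zd d → ℝ) : ℝ :=
  ∑' e : G.edges, (h (e : Zd d × Zd d).1 - h (e : Zd d × Zd d).2) ^ 2

/-- Effective resistance between `a` and `b` in `G` with unit resistances on the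
edges, defined through the Dirichlet variational principle. -/
noncomputable def effRes (G : LatticeGraph d) (a b : Zd d) : ℝ :=
  (sInf {r : ℝ | ∃ h : Zd d → ℝ, h a = 1 ∧ h b = 0 ∧ r = G.energy h})⁻¹

def deleteEdge (G : LatticeGraph d) (e : Zd d × Zd d) : LatticeGraph d :=
  ⟨G.verts, G.edges \ {e, (e.2, e.1)}⟩

/-- A cut-bond: an edge whose removal disconnects its endpoints. -/
def IsCutBond (G : LatticeGraph d) (e : Zd d × Zd d) : Prop :=
  e ∈ G.edges ∧ ¬ (G.deleteEdge e).Connected e.1 e.2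

/-- A cut-point: the endpoint of a cut-bond lying on the same side as the root `0`. -/
def IsCutPoint (G : LatticeGraph d) (x : Zd d) : Prop :=
  ∃ e, G.IsCutBond e ∧
    ((x = e.1 ∧ (G.deleteEdge e).Connected 0 e.1) ∨
      (x = e.2 ∧ (G.deleteEdge e).Connected 0 e.2))

/-- `G.Sep c a b` : every path from `a` to `b` in `G` passes through `c`. -/
def Sep (G : LatticeGraph d) (c a b : Zd d) : Prop :=
  ∀ m f, G.IsPath m f a b → ∃ i ≤ m, f i = c

/-- `y` is the first cut-point encountered on any path from `x` to the root `0`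
(with the convention that, if no cut-point separates `x` from `0`, `y` is a cut-point
at minimal graph distance from `0`). -/
def IsFirstCutPointFrom (G : LatticeGraph d) (x y : Zd d) : Prop :=
  (G.IsCutPoint y ∧ G.Sep y x 0 ∧ ∀ z, G.IsCutPoint z → G.Sep z x 0 → G.Sep z y 0) ∨
    ((¬ ∃ z, G.IsCutPoint z ∧ G.Sep z x 0) ∧ G.IsCutPoint y ∧
      ∀ z, G.IsCutPoint z → G.dist 0 y ≤ G.dist 0 z)

/-- The point `π_n(x)` of the paper. -/
noncomputable def firstCutPoint (G : LatticeGraph d) (x : Zd d) : Zd d :=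
  Classical.epsilon (G.IsFirstCutPointFrom x)

end LatticeGraph

/-! ### Plane trees and branching random walk embeddings -/

/-- A (plane) tree as a set of finite words: contains the root, is closed under
taking parents and under taking younger siblings. -/
def IsPlaneTree (t : Set (List ℕ)) : Prop :=
  [] ∈ t ∧ (∀ (w : List ℕ) (k : ℕ), w ++ [k] ∈ t → w ∈ t) ∧
    ∀ (w : List ℕ) (j k : ℕ), j ≤ k → w ++ [k] ∈ t → w ++ [j] ∈ t

/-- Number of children of the vertex `w` in the tree `t`. -/
noncomputable def childCount (t : Set (List ℕ)) (w : List ℕ) : ℕ :=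
  Set.ncard {k : ℕ | w ++ [k] ∈ t}

/-- A nearest-neighbour step of `ℤ^d`. -/
def IsUnitStep {d : ℕ} (v : Zd d) : Prop :=
  ∃ i : Fin d, (∀ j, j ≠ i → v j = 0) ∧ (v i = 1 ∨ v i = -1)

/-- `g` assigns nearest-neighbour increments along the edges of `t`. -/
def IsBRWEmbedding {d : ℕ} (t : Set (List ℕ)) (g : List ℕ → Zd d) : Prop :=
  ∀ w ∈ t, w ≠ [] → IsUnitStep (g w - g w.dropLast)

/-- The trace of the spatial tree `(t, g)`: the subgraph of `ℤ^d` whose vertices are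
the images of the vertices of `t` and whose edges are the images of the edges of `t`. -/
def traceGraph (d : ℕ) (t : Set (List ℕ)) (g : List ℕ → Zd d) : LatticeGraph d :=
  ⟨g '' t, {e | ∃ w ∈ t, w ≠ ([] : List ℕ) ∧ e = (g w.dropLast, g w)}⟩

open scoped ENNReal

/-- The Galton–Watson weight of a finite plane tree `t` for the offspring law `p`:
`∏_{v ∈ t} p(number of children of v)`. -/
noncomputable def gwWeight (p : PMF ℕ) (t : Set (List ℕ)) : ℝ≥0∞ :=
  ∏ᶠ w ∈ t, p (childCount t w)

/-- The weight of a "bush": the root has `Z̃ - 1` children (`Z̃` the size-biased law,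
`P[Z̃ = k] = k p_k`), each of which generates an independent critical Galton–Watson
tree with offspring law `p`. -/
noncomputable def bushWeight (p : PMF ℕ) (t : Set (List ℕ)) : ℝ≥0∞ :=
  ((childCount t [] + 1 : ℕ) : ℝ≥0∞) * p (childCount t [] + 1) *
    ∏ᶠ w ∈ t \ {([] : List ℕ)}, p (childCount t w)

/-! ### Moment conditions on the offspring law -/

def HasMeanOne (p : PMF ℕ) : Prop := ∑' k : ℕ, (k : ℝ) * (p k).toReal = 1

def FiniteSecondMoment (p : PMF ℕ) : Prop :=
  Summable fun k : ℕ => (k : ℝ) ^ 2 * (p k).toReal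

def PosVariance (p : PMF ℕ) : Prop :=
  0 < ∑' k : ℕ, ((k : ℝ) - 1) ^ 2 * (p k).toReal

def HasExpMoment (p : PMF ℕ) : Prop :=
  ∃ lam : ℝ, 0 < lam ∧ Summable fun k : ℕ => Real.exp (lam * k) * (p k).toReal

/-- The offspring distribution is non-lattice (aperiodic). -/
def AperiodicSupport (p : PMF ℕ) : Prop :=
  ∀ m : ℕ, 2 ≤ m → ∃ k : ℕ, p k ≠ 0 ∧ ¬ ((m : ℤ) ∣ ((k : ℤ) - 1))

/-- Standard deviation `σ_Z` of the offspring law (which has mean one). -/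
noncomputable def sigmaZ (p : PMF ℕ) : ℝ :=
  Real.sqrt (∑' k : ℕ, ((k : ℝ) - 1) ^ 2 * (p k).toReal)

/-- Euclidean distance on `ℤ^d`. -/
noncomputable def euclDist {d : ℕ} (x y : Zd d) : ℝ :=
  Real.sqrt (∑ i, ((x i : ℝ) - (y i : ℝ)) ^ 2)

/-!
### The bi-infinite incipient critical branching random walk `ω_{-∞,∞}`

The model is specified completely: a two-sided nearest-neighbour backbone walk
`walk` together with, at each backbone index `n`, an independent "bush"
(a finite plane tree `btree n` with root mapped to `walk n` and a branching random
walk embedding `bemb n`); the joint law of all cylinder events is prescribed by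
`hlaw` (uniform steps for the walk, size-biased root offspring and critical
Galton–Watson descendants for the bushes, uniform nearest-neighbour increments for
the embeddings).  `piv` enumerates the (a.s. existing) pivotal indices increasingly,
`piv 1` being the smallest positive one.
-/

structure BiInfModel (d : ℕ) (p : PMF ℕ) where
  Ω : Type
  mΩ : MeasurableSpace Ω
  P : @Measure Ω mΩ
  hP : IsProbabilityMeasure P
  walk : ℤ → Ω → Zd d
  btree : ℤ → Ω → Set (List ℕ)
  bemb : ℤ → Ω → List ℕ → Zd d
  piv : ℤ → Ω → ℤ
  hwalk0 : ∀ ω, walk 0 ω = 0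
  hstep : ∀ (n : ℤ) (ω : Ω), IsUnitStep (walk (n + 1) ω - walk n ω)
  hbtree : ∀ (n : ℤ) (ω : Ω), IsPlaneTree (btree n ω) ∧ (btree n ω).Finite
  hbroot : ∀ (n : ℤ) (ω : Ω), bemb n ω ([] : List ℕ) = walk n ω
  hbemb : ∀ (n : ℤ) (ω : Ω), IsBRWEmbedding (btree n ω) (bemb n ω)
  hlaw : ∀ (N : ℕ) (a : ℤ → Zd d), a 0 = 0 →
    (∀ k : ℤ, -(N : ℤ) ≤ k → k < (N : ℤ) → IsUnitStep (a (k + 1) - a k)) →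
    ∀ F : Finset ℤ, (∀ m ∈ F, -(N : ℤ) ≤ m ∧ m ≤ (N : ℤ)) →
    ∀ t : ℤ → Set (List ℕ), (∀ m ∈ F, IsPlaneTree (t m) ∧ (t m).Finite) →
    ∀ g : ℤ → List ℕ → Zd d,
      (∀ m ∈ F, g m ([] : List ℕ) = a m ∧ IsBRWEmbedding (t m) (g m)) →
    P {ω | (∀ k : ℤ, -(N : ℤ) ≤ k → k ≤ (N : ℤ) → walk k ω = a k) ∧
        ∀ m ∈ F, btree m ω = t m ∧ ∀ v ∈ t m, bemb m ω v = g m v}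
      = ((2 * d : ℕ) : ℝ≥0∞)⁻¹ ^ (2 * N) *
        ∏ m ∈ F, bushWeight p (t m) * ((2 * d : ℕ) : ℝ≥0∞)⁻¹ ^ ((t m).ncard - 1)
  hpiv : ∀ᵐ ω ∂P,
    (StrictMono fun i => piv i ω) ∧
    (∀ i : ℤ,
      (⋃ n ∈ Set.Iic (piv i ω), bemb n ω '' btree n ω) ∩
        (⋃ n ∈ Set.Ici (piv i ω + 1), bemb n ω '' btree n ω) = ∅) ∧
    (∀ j : ℤ,
      ((⋃ n ∈ Set.Iic j, bemb n ω '' btree n ω) ∩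
        (⋃ n ∈ Set.Ici (j + 1), bemb n ω '' btree n ω) = ∅) → (∃ i : ℤ, piv i ω = j)) ∧
    0 < piv 1 ω ∧
    ∀ j : ℤ, 0 < j →
      ((⋃ n ∈ Set.Iic j, bemb n ω '' btree n ω) ∩
        (⋃ n ∈ Set.Ici (j + 1), bemb n ω '' btree n ω) = ∅) → piv 1 ω ≤ j

namespace BiInfModel

variable {d : ℕ} {p : PMF ℕ}

/-- The vertex set `B^{(n)}(α(n))` of the bush attached at backbone index `n`. -/
def bushVerts (M : BiInfModel d p) (n : ℤ) (ω : M.Ω) : Set (Zd d) :=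
  M.bemb n ω '' M.btree n ω

/-- `α(i)` is a pivotal point: `B(α((-∞,i])) ∩ B(α([i+1,∞))) = ∅`. -/
def Pivotal (M : BiInfModel d p) (i : ℤ) (ω : M.Ω) : Prop :=
  (⋃ n ∈ Set.Iic i, M.bushVerts n ω) ∩ (⋃ n ∈ Set.Ici (i + 1), M.bushVerts n ω) = ∅

/-- The trace `ω_{-∞,∞}` as a subgraph of `ℤ^d` (bushes together with the backbone
edges). -/
noncomputable def graph (M : BiInfModel d p) (ω : M.Ω) : LatticeGraph d :=
  ⟨(⋃ n : ℤ, M.bushVerts n ω),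
    (⋃ n : ℤ, (traceGraph d (M.btree n ω) (M.bemb n ω)).edges) ∪
      ⋃ n : ℤ, {(M.walk n ω, M.walk (n + 1) ω)}⟩

/-- Conditional expectation given that `0` is a pivotal point. -/
noncomputable def condPiv (M : BiInfModel d p) (X : M.Ω → ℝ) : ℝ :=
  (∫ ω in {ω | M.Pivotal 0 ω}, X ω ∂M.P) / (M.P {ω | M.Pivotal 0 ω}).toReal

/-- `ρ₁ = E[R_eff(0, α(γ₁)) | 0 pivotal] / E[γ₁ | 0 pivotal]`. -/
noncomputable def rho1 (M : BiInfModel d p) : ℝ :=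
  M.condPiv (fun ω => (M.graph ω).effRes 0 (M.walk (M.piv 1 ω) ω)) /
    M.condPiv fun ω => (M.piv 1 ω : ℝ)

/-- `ρ₂ = E[d_{ω_{-∞,∞}}(0, α(γ₁)) | 0 pivotal] / E[γ₁ | 0 pivotal]`
(this is also the constant `σ_G`). -/
noncomputable def rho2 (M : BiInfModel d p) : ℝ :=
  M.condPiv (fun ω => ((M.graph ω).dist 0 (M.walk (M.piv 1 ω) ω) : ℝ)) /
    M.condPiv fun ω => (M.piv 1 ω : ℝ)

/-- `ρ = E[R_eff(0, α(γ₁)) | 0 pivotal] / E[d_{ω_{-∞,∞}}(0, α(γ₁)) | 0 pivotal]`. -/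
noncomputable def rhoR (M : BiInfModel d p) : ℝ :=
  M.condPiv (fun ω => (M.graph ω).effRes 0 (M.walk (M.piv 1 ω) ω)) /
    M.condPiv fun ω => ((M.graph ω).dist 0 (M.walk (M.piv 1 ω) ω) : ℝ)

end BiInfModel


namespace BushPf

/-! #### Heat kernel bound -/

/-- the `2d` lattice steps -/
abbrev Stp (d : ℕ) := Fin d × Bool

def vec {d : ℕ} (s : Stp d) : Zd d := Pi.single s.1 (if s.2 then 1 else -1)

/-- one-dimensional simple random walk kernel -/
def bk : ℕ → ℤ → ℝ
  | 0, x => if x = 0 then 1 else 0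
  | k + 1, x => (bk k (x + 1) + bk k (x - 1)) / 2

lemma bk_nonneg (k : ℕ) (x : ℤ) : 0 ≤ bk k x := by
  induction k generalizing x with
  | zero => unfold bk; split_ifs <;> norm_num
  | succ k ih => unfold bk; have := ih (x+1); have := ih (x-1); linarith

lemma bk_cases (k : ℕ) (x : ℤ) :
    (∃ j : ℕ, x = 2 * j - k ∧ bk k x ≤ (k.choose j : ℝ) / 2 ^ k) ∨ bk k x = 0 := by
  induction k generalizing x with
  | zero =>
    by_cases hx : x = 0
    · left; exact ⟨0, by simp [hx], by simp [bk, hx]⟩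
    · right; simp [bk, hx]
  | succ k ih =>
    have h2 : (2:ℝ) ^ (k+1) = 2 * 2 ^ k := by ring
    have hp : (0:ℝ) < 2 ^ k := by positivity
    have e : bk (k+1) x = (bk k (x + 1) + bk k (x - 1)) / 2 := rfl
    rcases ih (x+1) with ⟨j, hj, hb⟩ | h0
    · rcases ih (x-1) with ⟨i, hi, hc⟩ | h1
      · left
        have hij : j = i + 1 := by omega
        refine ⟨j, by push_cast; omega, ?_⟩
        subst hij
        rw [e, Nat.choose_succ_succ, h2]
        push_cast
        have : ((k.choose i : ℝ) + (k.choose (i+1) : ℝ)) / (2 * 2^k)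
          = ((k.choose (i+1) : ℝ) / 2^k + (k.choose i : ℝ)/2^k) / 2 := by field_simp; ring
        rw [Nat.succ_eq_add_one, this]; linarith
      · left
        refine ⟨j, by push_cast; omega, ?_⟩
        rw [e, h1, h2]
        have h3 : ((k.choose j : ℕ) : ℝ) ≤ ((k+1).choose j : ℕ) := by
          exact_mod_cast Nat.choose_le_choose j (Nat.le_succ k)
        calc (bk k (x+1) + 0)/2 ≤ ((k.choose j : ℝ)/2^k)/2 := by linarith
          _ = (k.choose j : ℝ)/(2 * 2^k) := by field_simp
          _ ≤ _ := by gcongr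
    · rcases ih (x-1) with ⟨i, hi, hc⟩ | h1
      · left
        refine ⟨i+1, by push_cast; omega, ?_⟩
        rw [e, h0, h2]
        have h3 : ((k.choose i : ℕ) : ℝ) ≤ ((k+1).choose (i+1) : ℕ) := by
          rw [Nat.choose_succ_succ]; push_cast; linarith [(Nat.cast_nonneg (k.choose (i+1)) : (0:ℝ) ≤ _)]
        calc (0 + bk k (x-1))/2 ≤ ((k.choose i : ℝ)/2^k)/2 := by linarith
          _ = (k.choose i : ℝ)/(2 * 2^k) := by field_simp
          _ ≤ _ := by gcongr
      · right; rw [e, h0, h1]; norm_num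

lemma central_sq (n : ℕ) : n.centralBinom ^ 2 * (2 * n + 1) ≤ 16 ^ n := by
  induction n with
  | zero => simp
  | succ n ih =>
    have h := Nat.succ_mul_centralBinom_succ n
    have : (n+1)^2 * ((n+1).centralBinom ^ 2 * (2*(n+1)+1)) ≤ (n+1)^2 * 16 ^ (n+1) := by
      calc (n+1)^2 * ((n+1).centralBinom ^ 2 * (2*(n+1)+1))
          = ((n+1) * (n+1).centralBinom)^2 * (2*n+3) := by ring
        _ = (n.centralBinom^2 * (2*n+1)) * (4 * ((2*n+1) * (2*n+3))) := by rw [h]; ring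
        _ ≤ 16^n * (16 * (n+1)^2) := by
            refine Nat.mul_le_mul ih ?_
            nlinarith
        _ = _ := by ring
    exact Nat.le_of_mul_le_mul_left this (by positivity)

lemma choose_sq (k j : ℕ) : k.choose j ^ 2 * (k + 1) ≤ 4 ^ k := by
  have h1 : k.choose j ≤ k.choose (k/2) := Nat.choose_le_middle j k
  refine le_trans (Nat.mul_le_mul_right _ (Nat.pow_le_pow_left h1 2)) ?_
  rcases Nat.even_or_odd' k with ⟨n, hn | hn⟩
  · subst hn
    have := central_sq n
    rw [Nat.centralBinom] at this
    rw [Nat.mul_div_cancel_left n (by norm_num), pow_mul]; norm_num; exact this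
  · subst hn
    have := central_sq (n+1)
    have h2 : (n+1).centralBinom = 2 * (2*n+1).choose n := by
      rw [Nat.centralBinom_eq_two_mul_choose, show 2 * (n+1) = (2*n+1) + 1 by ring, Nat.choose_succ_succ,
        Nat.succ_eq_add_one, ← Nat.choose_symm_half n]; ring
    have h3 : (2*n+1)/2 = n := by omega
    rw [h3]
    rw [h2] at this
    have h4 : (4:ℕ)^(2*n+1) * 4 = 16^(n+1) := by
      rw [show (16:ℕ) = 4^2 by norm_num, ← pow_mul]; ring
    nlinarith [sq_nonneg ((2*n+1).choose n)]

lemma bk_sq (k : ℕ) (x : ℤ) : bk k x ^ 2 ≤ 1 / ((k:ℝ) + 1) := by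
  rcases bk_cases k x with ⟨j, _, h⟩ | h
  · have h1 : bk k x ^ 2 ≤ ((k.choose j : ℝ) / 2 ^ k) ^ 2 := by
      exact pow_le_pow_left₀ (bk_nonneg k x) h 2
    refine h1.trans ?_
    have h2 : ((k.choose j : ℕ):ℝ)^2 * ((k:ℝ)+1) ≤ 4^k := by exact_mod_cast choose_sq k j
    rw [div_pow, ← pow_mul, mul_comm k 2, pow_mul, div_le_div_iff₀ (by positivity) (by positivity)]
    norm_num; linarith
  · rw [h]; simp only [ne_eq, OfNat.ofNat_ne_zero, not_false_eq_true, zero_pow]; positivity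

/-- sum of shifts -/
def Dop {d : ℕ} (h : (Fin d → ℕ) → ℝ) : (Fin d → ℕ) → ℝ := fun k => ∑ i, h (k + Pi.single i 1)

lemma Dop_iter_mono {d : ℕ} (n : ℕ) {h g : (Fin d → ℕ) → ℝ} (hg : ∀ k, h k ≤ g k) (k : Fin d → ℕ) :
    (Dop^[n] h) k ≤ (Dop^[n] g) k := by
  induction n generalizing k with
  | zero => exact hg k
  | succ n ih =>
    rw [Function.iterate_succ_apply', Function.iterate_succ_apply']
    exact Finset.sum_le_sum fun i _ => ih _

lemma Dop_sq {d : ℕ} (n : ℕ) (h : (Fin d → ℕ) → ℝ) (k : Fin d → ℕ) :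
    ((Dop^[n] h) k)^2 ≤ (d:ℝ)^n * (Dop^[n] fun k => (h k)^2) k := by
  induction n generalizing k with
  | zero => simp
  | succ n ih =>
    rw [Function.iterate_succ_apply', Function.iterate_succ_apply']
    unfold Dop
    refine (sq_sum_le_card_mul_sum_sq).trans ?_
    rw [Finset.card_univ, Fintype.card_fin, pow_succ, mul_comm ((d:ℝ)^n), mul_assoc, Finset.mul_sum _ _ ((d:ℝ)^n)]
    gcongr with i _
    exact ih _

lemma Dop_comm {d : ℕ} (j : Fin d) (n : ℕ) (h : (Fin d → ℕ) → ℝ) (k : Fin d → ℕ) :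
    (Dop^[n] fun k => h (k + Pi.single j 1)) k = (Dop^[n] h) (k + Pi.single j 1) := by
  induction n generalizing k with
  | zero => rfl
  | succ n ih =>
    rw [Function.iterate_succ_apply', Function.iterate_succ_apply']
    unfold Dop at *
    refine Finset.sum_congr rfl fun i _ => ?_
    rw [ih, add_right_comm]

lemma Dop_leibniz {d : ℕ} (j : Fin d) (n : ℕ) (h : (Fin d → ℕ) → ℝ) (k : Fin d → ℕ) :
    (Dop^[n+1] fun k => (k j : ℝ) * h k) k
      = ((n:ℝ)+1) * (Dop^[n] h) (k + Pi.single j 1) + (k j : ℝ) * (Dop^[n+1] h) k := by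
  induction n generalizing k with
  | zero =>
    simp only [zero_add, Function.iterate_one, Function.iterate_zero, id]
    unfold Dop
    rw [Finset.mul_sum]
    have : ∀ i : Fin d, (((k + Pi.single i 1 : Fin d → ℕ) j : ℕ) : ℝ) * h (k + Pi.single i 1)
      = (if i = j then h (k + Pi.single j 1) else 0) + (k j : ℝ) * h (k + Pi.single i 1) := by
      intro i
      by_cases hij : i = j
      · subst hij; simp; ring
      · simp [hij, Ne.symm hij]
    simp_rw [this, Finset.sum_add_distrib]
    simp
  | succ n ih =>
    rw [Function.iterate_succ_apply']
    have e1 : (Dop^[n+1+1] h) k = ∑ i, (Dop^[n+1] h) (k + Pi.single i 1) := by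
      rw [Function.iterate_succ_apply']; rfl
    have e2 : (Dop^[n+1] h) (k + Pi.single j 1) = ∑ i, (Dop^[n] h) (k + Pi.single j 1 + Pi.single i 1) := by
      rw [Function.iterate_succ_apply']; rfl
    rw [show ∀ f : (Fin d → ℕ) → ℝ, Dop f k = ∑ i, f (k + Pi.single i 1) from fun _ => rfl]
    simp_rw [ih]
    rw [Finset.sum_add_distrib, e1, Finset.mul_sum]
    have : ∀ i : Fin d, (((k + Pi.single i 1 : Fin d → ℕ) j : ℕ) : ℝ) * (Dop^[n+1] h) (k + Pi.single i 1)
      = (if i = j then (Dop^[n+1] h) (k + Pi.single j 1) else 0)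
        + (k j : ℝ) * (Dop^[n+1] h) (k + Pi.single i 1) := by
      intro i
      by_cases hij : i = j
      · subst hij; simp; ring
      · simp [hij, Ne.symm hij]
    simp_rw [this, Finset.sum_add_distrib]
    rw [← Finset.mul_sum]
    have e3 : ∑ i, (Dop^[n] h) (k + Pi.single i 1 + Pi.single j 1) = (Dop^[n+1] h) (k + Pi.single j 1) := by
      rw [e2]; exact Finset.sum_congr rfl fun i _ => by rw [add_right_comm]
    rw [e3]; simp; ring

lemma Dop_one {d : ℕ} (n : ℕ) (k : Fin d → ℕ) : (Dop^[n] fun _ => (1:ℝ)) k = (d:ℝ)^n := by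
  induction n generalizing k with
  | zero => simp
  | succ n ih => rw [Function.iterate_succ_apply']; unfold Dop at *; simp [ih, pow_succ]; ring

lemma Dop_prod {d : ℕ} (A : Finset (Fin d)) (n : ℕ) :
    (Dop^[n] fun k => ∏ i ∈ A, (1 / ((k i : ℝ) + 1))) 0 ≤ (d:ℝ)^(n + A.card) / ((n:ℝ)+1)^A.card := by
  induction A using Finset.induction_on generalizing n with
  | empty => simp [Dop_one]
  | insert j A hj ih =>
    set h : (Fin d → ℕ) → ℝ := fun k => (k j : ℝ)⁻¹ * ∏ i ∈ A, (1 / ((k i : ℝ) + 1)) with hh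
    have h1 := Dop_leibniz j n h 0
    have h2 : (Dop^[n+1] fun k => (k j : ℝ) * h k) 0 ≤ (Dop^[n+1] fun k => ∏ i ∈ A, (1 / ((k i : ℝ) + 1))) 0 := by
      refine Dop_iter_mono _ (fun k => ?_) _
      have hp : 0 ≤ ∏ i ∈ A, (1 / ((k i : ℝ) + 1)) := Finset.prod_nonneg fun i _ => by positivity
      rw [hh]
      by_cases h0 : k j = 0
      · simp [h0]; exact Finset.prod_nonneg fun i _ => by positivity
      · have : (k j : ℝ) ≠ 0 := by exact_mod_cast h0
        simp only [← mul_assoc, mul_inv_cancel₀ this, one_mul]; exact le_rfl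
    rw [← Dop_comm] at h1
    have h3 : (fun k : Fin d → ℕ => h (k + Pi.single j 1)) = fun k => ∏ i ∈ insert j A, (1 / ((k i : ℝ) + 1)) := by
      funext k
      rw [Finset.prod_insert hj, hh]
      simp only [Pi.add_apply, Pi.single_eq_same]
      congr 1
      · rw [Nat.cast_add, Nat.cast_one, one_div]
      · refine Finset.prod_congr rfl fun i hi => ?_
        have : i ≠ j := fun h => hj (h ▸ hi)
        simp [this]
    rw [h3] at h1
    have h4 := ih (n+1)
    rw [Finset.card_insert_of_notMem hj]
    have hn : (0:ℝ) < (n:ℝ)+1 := by positivity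
    have h5 : ((n:ℝ)+1) * (Dop^[n] fun k => ∏ i ∈ insert j A, (1 / ((k i : ℝ) + 1))) 0
        ≤ (d:ℝ)^(n+1+A.card) / (((n+1:ℕ):ℝ)+1)^A.card := by
      have := h2.trans h4
      rw [h1] at this; simpa using this
    have h6 : (d:ℝ)^(n+1+A.card) / (((n+1:ℕ):ℝ)+1)^A.card ≤ (d:ℝ)^(n+1+A.card) / ((n:ℝ)+1)^A.card := by
      gcongr; push_cast; linarith
    rw [pow_succ, ← div_div, le_div_iff₀ hn, show n + (A.card+1) = n+1+A.card by ring]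
    linarith

/-- real averaging operator -/
def PR {d : ℕ} (f : Zd d → ℝ) : Zd d → ℝ := fun x => (2 * d : ℝ)⁻¹ * ∑ s : Stp d, f (x + vec s)

def Phi {d : ℕ} (k : Fin d → ℕ) (x : Zd d) : ℝ := ∏ i, bk (k i) (x i)

lemma PR_Phi {d : ℕ} (k : Fin d → ℕ) (x : Zd d) :
    PR (Phi k) x = (d:ℝ)⁻¹ * ∑ i, Phi (k + Pi.single i 1) x := by
  have key : ∀ i : Fin d, Phi k (x + vec (i, true)) + Phi k (x + vec (i, false))
      = 2 * Phi (k + Pi.single i 1) x := by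
    intro i
    have a1 : ∀ b, Phi k (x + vec (i,b)) = bk (k i) (x i + (if b then 1 else -1))
        * ∏ j ∈ Finset.univ.erase i, bk (k j) (x j) := by
      intro b
      unfold Phi
      rw [← Finset.mul_prod_erase Finset.univ _ (Finset.mem_univ i)]
      congr 1
      · simp [vec]
      · exact Finset.prod_congr rfl fun j hj => by
          have : j ≠ i := Finset.ne_of_mem_erase hj
          simp [vec, this]
    have a2 : Phi (k + Pi.single i 1) x = bk (k i + 1) (x i)
        * ∏ j ∈ Finset.univ.erase i, bk (k j) (x j) := by
      unfold Phi
      rw [← Finset.mul_prod_erase Finset.univ _ (Finset.mem_univ i)]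
      congr 1
      · simp
      · exact Finset.prod_congr rfl fun j hj => by
          have : j ≠ i := Finset.ne_of_mem_erase hj
          simp [this]
    rw [a1, a1, a2]
    have : bk (k i + 1) (x i) = (bk (k i) (x i + 1) + bk (k i) (x i - 1)) / 2 := rfl
    rw [this]; simp; ring_nf
  unfold PR
  rw [Fintype.sum_prod_type]
  simp only [Fintype.sum_bool]
  simp_rw [key]
  rw [← Finset.mul_sum, mul_inv]; ring

lemma PR_iter_Phi {d : ℕ} (n : ℕ) (x : Zd d) :
    (PR^[n] (Phi 0)) x = ((d:ℝ)⁻¹)^n * (Dop^[n] fun k => Phi k x) 0 := by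
  suffices h : ∀ k : Fin d → ℕ, (PR^[n] (Phi k)) x = ((d:ℝ)⁻¹)^n * (Dop^[n] fun k => Phi k x) k from h 0
  induction n generalizing x with
  | zero => intro k; simp
  | succ n ih =>
    intro k
    have e : PR^[n] (Phi k) = fun x => ((d:ℝ)⁻¹)^n * (Dop^[n] fun k => Phi k x) k := by
      funext x; exact ih x k
    have lin : ∀ (m : ℕ) (k : Fin d → ℕ) (x : Zd d), PR (fun x => (Dop^[m] fun k => Phi k x) k) x
        = (d:ℝ)⁻¹ * (Dop^[m+1] fun k => Phi k x) k := by
      intro m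
      induction m with
      | zero => intro k x; exact PR_Phi k x
      | succ m ihm =>
        intro k x
        rw [Function.iterate_succ_apply']
        have e1 : (fun x : Zd d => (Dop^[m+1] fun k => Phi k x) k)
          = fun x => ∑ i, (Dop^[m] fun k => Phi k x) (k + Pi.single i 1) := by
          funext x; rw [Function.iterate_succ_apply']; rfl
        rw [e1]
        have e2 : PR (fun x : Zd d => ∑ i, (Dop^[m] fun k => Phi k x) (k + Pi.single i 1)) x
          = ∑ i, PR (fun x : Zd d => (Dop^[m] fun k => Phi k x) (k + Pi.single i 1)) x := by
          unfold PR; rw [Finset.sum_comm, Finset.mul_sum]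
        rw [e2]
        simp_rw [ihm]
        unfold Dop; rw [Finset.mul_sum]
    rw [Function.iterate_succ_apply', e]
    have e3 : PR (fun x : Zd d => ((d:ℝ)⁻¹)^n * (Dop^[n] fun k => Phi k x) k) x
      = ((d:ℝ)⁻¹)^n * PR (fun x : Zd d => (Dop^[n] fun k => Phi k x) k) x := by
      unfold PR; rw [← Finset.mul_sum]; ring
    rw [e3, lin, pow_succ]; ring

lemma Phi_zero {d : ℕ} (x : Zd d) : Phi 0 x = if x = 0 then 1 else 0 := by
  unfold Phi
  split_ifs with h
  · subst h; simp [bk]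
  · obtain ⟨i, hi⟩ := Function.ne_iff.mp h
    exact Finset.prod_eq_zero (Finset.mem_univ i) (by simp only [Pi.zero_apply, bk] at *; rw [if_neg hi])

lemma heat_real {d : ℕ} (hd : 0 < d) (n : ℕ) (x : Zd d) :
    ((PR^[n] (Phi 0)) x)^2 ≤ (d:ℝ)^d / ((n:ℝ)+1)^d := by
  have hd' : (0:ℝ) < d := by exact_mod_cast hd
  rw [PR_iter_Phi, mul_pow]
  have h1 := Dop_sq n (fun k => Phi k x) 0
  have h2 : (Dop^[n] fun k => (Phi k x)^2) 0 ≤ (Dop^[n] fun k : Fin d → ℕ => ∏ i ∈ Finset.univ, (1 / ((k i : ℝ) + 1))) 0 := by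
    refine Dop_iter_mono _ (fun k => ?_) _
    unfold Phi
    rw [← Finset.prod_pow]
    exact Finset.prod_le_prod (fun i _ => sq_nonneg _) fun i _ => bk_sq _ _
  have h3 := Dop_prod (Finset.univ : Finset (Fin d)) n
  rw [Finset.card_univ, Fintype.card_fin] at h3
  calc (((d:ℝ)⁻¹)^n)^2 * ((Dop^[n] fun k => Phi k x) 0)^2
      ≤ (((d:ℝ)⁻¹)^n)^2 * ((d:ℝ)^n * ((d:ℝ)^(n + d) / ((n:ℝ)+1)^d)) := by
        gcongr; exact h1.trans (by gcongr; exact h2.trans h3)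
    _ = _ := by rw [pow_add, inv_pow]; field_simp

/-! #### The averaging operator and its kernel in `ℝ≥0∞` -/

def c0 (d : ℕ) : ℝ≥0∞ := ((2 * d : ℕ) : ℝ≥0∞)⁻¹

def Pop {d : ℕ} (f : Zd d → ℝ≥0∞) : Zd d → ℝ≥0∞ := fun x => ∑ s : Stp d, c0 d * f (x + vec s)

def dl {d : ℕ} (y x : Zd d) : ℝ≥0∞ := if x = y then 1 else 0

def pk {d : ℕ} (n : ℕ) (x y : Zd d) : ℝ≥0∞ := (Pop^[n] (dl y)) x

lemma card_c0 {d : ℕ} (hd : 0 < d) : ∑ _s : Stp d, c0 d = 1 := by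
  simp only [Finset.sum_const, Finset.card_univ, Fintype.card_prod, Fintype.card_fin, Fintype.card_bool, nsmul_eq_mul, c0]
  rw [mul_comm d 2]
  exact ENNReal.mul_inv_cancel (by simp; omega) (ENNReal.natCast_ne_top _)

lemma Pop_mono {d : ℕ} {f g : Zd d → ℝ≥0∞} (h : ∀ x, f x ≤ g x) (x : Zd d) : Pop f x ≤ Pop g x :=
  Finset.sum_le_sum fun _ _ => mul_le_mul_right (h _) _

lemma Popn_mono {d : ℕ} (n : ℕ) {f g : Zd d → ℝ≥0∞} (h : ∀ x, f x ≤ g x) (x : Zd d) :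
    (Pop^[n] f) x ≤ (Pop^[n] g) x := by
  induction n generalizing x with
  | zero => exact h x
  | succ n ih =>
    rw [Function.iterate_succ_apply', Function.iterate_succ_apply']
    exact Pop_mono ih x

lemma pk_zero {d : ℕ} (x y : Zd d) : pk 0 x y = if x = y then 1 else 0 := rfl

lemma pk_succ {d : ℕ} (n : ℕ) (x y : Zd d) : pk (n+1) x y = Pop (fun z => pk n z y) x := by
  unfold pk; rw [Function.iterate_succ_apply']

lemma Popn_eq {d : ℕ} (n : ℕ) (f : Zd d → ℝ≥0∞) (x : Zd d) :
    (Pop^[n] f) x = ∑' z, pk n x z * f z := by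
  induction n generalizing x with
  | zero =>
    rw [tsum_eq_single x]
    · simp [pk_zero]
    · intro z hz; simp [pk_zero, Ne.symm hz]
  | succ n ih =>
    rw [Function.iterate_succ_apply']
    simp_rw [pk_succ]
    unfold Pop at *
    simp_rw [ih, Finset.sum_mul]
    rw [Summable.tsum_finsetSum (fun _ _ => ENNReal.summable)]
    refine Finset.sum_congr rfl fun s _ => ?_
    rw [← ENNReal.tsum_mul_left]
    simp_rw [mul_assoc]

lemma pk_conv {d : ℕ} (n m : ℕ) (x y : Zd d) : ∑' z, pk n x z * pk m z y = pk (n+m) x y := by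
  rw [← Popn_eq n (fun z => pk m z y) x]
  unfold pk
  rw [Function.iterate_add_apply]

lemma Popn_one {d : ℕ} (hd : 0 < d) (n : ℕ) (x : Zd d) : (Pop^[n] (fun _ => (1:ℝ≥0∞))) x = 1 := by
  induction n generalizing x with
  | zero => rfl
  | succ n ih =>
    rw [Function.iterate_succ_apply']
    unfold Pop at *
    simp_rw [ih, mul_one]; exact card_c0 hd

lemma pk_sum {d : ℕ} (hd : 0 < d) (n : ℕ) (x : Zd d) : ∑' z, pk n x z = 1 := by
  rw [← Popn_one hd n x, Popn_eq]; simp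

lemma pk_trans {d : ℕ} (n : ℕ) (x y : Zd d) : pk n x y = pk n (x - y) 0 := by
  induction n generalizing x with
  | zero => simp [pk_zero, sub_eq_zero]
  | succ n ih =>
    rw [pk_succ, pk_succ]; unfold Pop
    refine Finset.sum_congr rfl fun s _ => ?_
    simp only
    rw [ih, add_sub_right_comm]

lemma vec_not {d : ℕ} (i : Fin d) (b : Bool) : vec (i, !b) = - vec (i, b) := by
  unfold vec
  rw [← Pi.single_neg]
  cases b <;> simp

lemma pk_neg {d : ℕ} (n : ℕ) (x : Zd d) : pk n (-x) 0 = pk n x 0 := by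
  induction n generalizing x with
  | zero => simp [pk_zero]
  | succ n ih =>
    rw [pk_succ, pk_succ]; unfold Pop
    rw [Fintype.sum_prod_type, Fintype.sum_prod_type]
    refine Finset.sum_congr rfl fun i _ => ?_
    simp only [Fintype.sum_bool]
    have h1 : vec (i, false) = - vec (i, true) := vec_not i true
    rw [h1, add_comm]
    congr 2
    · rw [← ih]; congr 1; abel
    · rw [← ih]; congr 1; abel

lemma pk_symm {d : ℕ} (n : ℕ) (x y : Zd d) : pk n x y = pk n y x := by
  rw [pk_trans, pk_trans n y x, ← pk_neg, neg_sub]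

lemma PR_iter_nonneg {d : ℕ} (n : ℕ) (x : Zd d) : 0 ≤ (PR^[n] (Phi 0)) x := by
  induction n generalizing x with
  | zero => simp only [Function.iterate_zero, id]; rw [Phi_zero]; split_ifs <;> norm_num
  | succ n ih =>
    rw [Function.iterate_succ_apply']; unfold PR at *
    exact mul_nonneg (by positivity) (Finset.sum_nonneg fun s _ => ih _)

lemma pk_real {d : ℕ} (hd : 0 < d) (n : ℕ) (x : Zd d) : pk n x 0 = ENNReal.ofReal ((PR^[n] (Phi 0)) x) := by
  induction n generalizing x with
  | zero =>
    simp only [Function.iterate_zero, id]; rw [Phi_zero, pk_zero]; split_ifs <;> simp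
  | succ n ih =>
    rw [Function.iterate_succ_apply', pk_succ]
    unfold Pop
    simp_rw [ih]
    have : ∀ f : Zd d → ℝ, PR f x = (2 * d : ℝ)⁻¹ * ∑ s : Stp d, f (x + vec s) := fun _ => rfl
    rw [this, ← Finset.mul_sum, ENNReal.ofReal_mul (by positivity),
      ENNReal.ofReal_sum_of_nonneg (fun _ _ => PR_iter_nonneg n _)]
    congr 1
    rw [c0, ENNReal.ofReal_inv_of_pos (by positivity)]
    congr 1
    rw [← ENNReal.ofReal_natCast]; push_cast; rfl

/-- the on-diagonal decay profile -/
def hk (s : ℝ) (n : ℕ) : ℝ≥0∞ := ENNReal.ofReal (((n:ℝ)+1) ^ (-s))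

lemma pk_le {d : ℕ} (hd : 0 < d) (n : ℕ) (x y : Zd d) :
    pk n x y ≤ ENNReal.ofReal ((d:ℝ) ^ ((d:ℝ)/2)) * hk ((d:ℝ)/2) n := by
  have hd' : (0:ℝ) < d := by exact_mod_cast hd
  rw [pk_trans, pk_real hd, hk, ← ENNReal.ofReal_mul (by positivity)]
  apply ENNReal.ofReal_le_ofReal
  have h := heat_real hd n (x - y)
  have hn : (0:ℝ) < (n:ℝ)+1 := by positivity
  refine abs_le_of_sq_le_sq' ?_ (by positivity) |>.2
  refine h.trans (le_of_eq ?_)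
  rw [mul_pow, ← Real.rpow_natCast _ 2, ← Real.rpow_natCast (((n:ℝ)+1) ^ (-((d:ℝ)/2))) 2, ← Real.rpow_mul hd'.le,
    ← Real.rpow_mul hn.le]
  push_cast
  rw [show (d:ℝ)/2*2 = d by ring, show -((d:ℝ)/2)*2 = -d by ring, Real.rpow_neg hn.le, Real.rpow_natCast, Real.rpow_natCast]
  rfl

/-- squared norm -/
def nsq {d : ℕ} (x : Zd d) : ℕ := ∑ i, (x i).natAbs ^ 2

lemma nsq_cast {d : ℕ} (x : Zd d) : ((nsq x : ℕ) : ℤ) = ∑ i, (x i)^2 := by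
  unfold nsq; push_cast; simp [sq_abs]

lemma nsq_step {d : ℕ} (x : Zd d) (i : Fin d) :
    nsq (x + vec (i, true)) + nsq (x + vec (i, false)) = 2 * nsq x + 2 := by
  have : ((nsq (x + vec (i, true)) + nsq (x + vec (i, false)) : ℕ) : ℤ) = (2 * nsq x + 2 : ℕ) := by
    push_cast
    simp only [nsq_cast]
    rw [← Finset.sum_add_distrib, Finset.mul_sum]
    have : ∀ j : Fin d, ((x + vec (i, true)) j)^2 + ((x + vec (i, false)) j)^2
        = 2 * (x j)^2 + if j = i then 2 else 0 := by
      intro j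
      by_cases h : j = i
      · subst h; simp [vec]; ring
      · simp [vec, h]; ring
    simp_rw [this, Finset.sum_add_distrib]; simp
  exact_mod_cast this

lemma Pop_nsq {d : ℕ} (hd : 0 < d) (c : ℝ≥0∞) (x : Zd d) :
    Pop (fun x => (nsq x : ℝ≥0∞) + c) x = (nsq x : ℝ≥0∞) + (c + 1) := by
  unfold Pop
  simp only [mul_add, Finset.sum_add_distrib]
  have h1 : ∑ s : Stp d, c0 d * (nsq (x + vec s) : ℝ≥0∞) = nsq x + 1 := by
    rw [← Finset.mul_sum, Fintype.sum_prod_type]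
    simp only [Fintype.sum_bool]
    have : ∀ i : Fin d, (nsq (x + vec (i, true)) : ℝ≥0∞) + nsq (x + vec (i, false)) = 2 * (nsq x + 1) := by
      intro i
      have := nsq_step x i
      rw [← Nat.cast_add, this]; push_cast; ring
    simp_rw [this]
    have h2 : (0:ℝ≥0∞) < d := by exact_mod_cast hd
    simp only [Finset.sum_const, Finset.card_univ, Fintype.card_fin, nsmul_eq_mul, c0]
    rw [← mul_assoc, ← mul_assoc]
    have : (((2 * d : ℕ) : ℝ≥0∞)⁻¹ * d * 2) = 1 := by
      rw [mul_assoc, mul_comm (d:ℝ≥0∞) 2]; push_cast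
      exact ENNReal.inv_mul_cancel (by simp; omega) (by simp [ENNReal.mul_eq_top])
    rw [this, one_mul]
  rw [h1, ← Finset.sum_mul, card_c0 hd]; ring

lemma pk_nsq {d : ℕ} (hd : 0 < d) (n : ℕ) : ∑' z : Zd d, pk n 0 z * (nsq z : ℝ≥0∞) = n := by
  rw [← Popn_eq n (fun z => (nsq z : ℝ≥0∞))]
  suffices h : ∀ n : ℕ, ∀ x : Zd d, (Pop^[n] (fun z => (nsq z : ℝ≥0∞))) x = nsq x + n by
    rw [h]; simp [nsq]
  intro n
  induction n with
  | zero => intro x; simp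
  | succ n ih =>
    intro x
    rw [Function.iterate_succ_apply', show Pop^[n] (fun z => (nsq z : ℝ≥0∞)) = fun x => (nsq x : ℝ≥0∞) + n from funext ih,
      Pop_nsq hd]
    push_cast; rfl

/-! #### Spatial trees and sums over them -/

inductive ET (S : Type) : Type
  | node (k : ℕ) (s : Fin k → S) (c : Fin k → ET S) : ET S

namespace ET

def toW {S : Type} : ET S → WType (fun a : (Σ k : ℕ, Fin k → S) => Fin a.1)
  | node k s c => WType.mk ⟨k, s⟩ fun i => toW (c i)

lemma toW_inj {S : Type} : Function.Injective (toW (S := S)) := by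
  intro a
  induction a with
  | node k s c ih =>
    intro b hb
    cases b with
    | node k' s' c' =>
      simp only [toW, WType.mk.injEq, Sigma.mk.injEq] at hb
      obtain ⟨⟨rfl, h2⟩, h3⟩ := hb
      have h2' := eq_of_heq h2
      subst h2'
      have h3' := eq_of_heq h3
      congr 1
      funext i
      exact ih i (congrFun h3' i)

instance {S : Type} [Countable S] : Countable (ET S) := by
  have : Encodable S := Encodable.ofCountable S
  exact toW_inj.countable

def equivSig (S : Type) : (Σ k : ℕ, Fin k → S × ET S) ≃ ET S where
  toFun a := node a.1 (fun i => (a.2 i).1) (fun i => (a.2 i).2)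
  invFun T := match T with
    | node k s c => ⟨k, fun i => (s i, c i)⟩
  left_inv a := rfl
  right_inv T := by cases T; rfl

end ET

lemma tsum_ET {S : Type} (F : ET S → ℝ≥0∞) :
    ∑' T, F T = ∑' k : ℕ, ∑' v : Fin k → S × ET S, F (ET.node k (fun i => (v i).1) (fun i => (v i).2)) := by
  rw [← (ET.equivSig S).tsum_eq, ENNReal.tsum_sigma']
  rfl

section iid
variable {α : Type} (w : α → ℝ≥0∞)

def wt {k : ℕ} (v : Fin k → α) : ℝ≥0∞ := ∏ i, w (v i)

lemma tsum_cons {k : ℕ} (F : (Fin (k+1) → α) → ℝ≥0∞) :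
    ∑' v, F v = ∑' a : α, ∑' v : Fin k → α, F (Fin.cons a v) := by
  rw [← (Fin.consEquiv (fun _ : Fin (k+1) => α)).tsum_eq, ENNReal.tsum_prod']
  rfl

lemma wt_cons {k : ℕ} (a : α) (v : Fin k → α) : wt w (Fin.cons a v : Fin (k+1) → α) = w a * wt w v := by
  unfold wt; rw [Fin.prod_univ_succ]; simp

lemma iid0 (k : ℕ) : ∑' v : Fin k → α, wt w v = (∑' a, w a) ^ k := by
  induction k with
  | zero => simp [wt]
  | succ k ih =>
    rw [tsum_cons]
    simp_rw [wt_cons, ENNReal.tsum_mul_left, ih, ENNReal.tsum_mul_right]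
    rw [pow_succ]; ring

lemma iid1 (hW : ∑' a, w a = 1) (f : α → ℝ≥0∞) (k : ℕ) :
    ∑' v : Fin k → α, wt w v * ∑ i, f (v i) = k * ∑' a, w a * f a := by
  induction k with
  | zero => simp
  | succ k ih =>
    rw [tsum_cons]
    simp_rw [wt_cons, Fin.sum_univ_succ, Fin.cons_zero, Fin.cons_succ, mul_add, ENNReal.tsum_add]
    have h1 : ∀ a, ∑' v : Fin k → α, w a * wt w v * f a = w a * f a := by
      intro a
      rw [ENNReal.tsum_mul_right, ENNReal.tsum_mul_left, iid0, hW, one_pow, mul_one]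
    have h2 : ∀ a, ∑' v : Fin k → α, w a * wt w v * ∑ i, f (v i) = w a * (k * ∑' a, w a * f a) := by
      intro a
      simp_rw [mul_assoc]
      rw [ENNReal.tsum_mul_left, ih]
    simp_rw [h1, h2]
    rw [ENNReal.tsum_mul_right, hW]; push_cast; ring

lemma iid2 (hW : ∑' a, w a = 1) (f g : α → ℝ≥0∞) (k : ℕ) :
    ∑' v : Fin k → α, wt w v * ((∑ i, f (v i)) * (∑ i, g (v i)))
      ≤ k * (∑' a, w a * (f a * g a)) + (k:ℝ≥0∞)^2 * ((∑' a, w a * f a) * (∑' a, w a * g a)) := by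
  induction k with
  | zero => simp
  | succ k ih =>
    rw [tsum_cons]
    simp_rw [wt_cons, Fin.sum_univ_succ, Fin.cons_zero, Fin.cons_succ]
    have h0 : ∀ (a : α) (v : Fin k → α), w a * wt w v * ((f a + ∑ i, f (v i)) * (g a + ∑ i, g (v i)))
      = (w a * (f a * g a)) * wt w v + (w a * f a) * (wt w v * ∑ i, g (v i))
        + (w a * g a) * (wt w v * ∑ i, f (v i)) + w a * (wt w v * ((∑ i, f (v i)) * (∑ i, g (v i)))) := by
      intro a v; ring
    simp_rw [h0, ENNReal.tsum_add, ENNReal.tsum_mul_left, iid0, iid1 w hW, ENNReal.tsum_mul_right, hW]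
    refine (add_le_add_right (mul_le_mul_right ih 1) _).trans ?_
    push_cast
    set A := ∑' a, w a * (f a * g a)
    set B := ∑' a, w a * f a
    set C := ∑' a, w a * g a
    calc A * 1 ^ k + B * (k * C) + C * (k * B) + 1 * (k * A + k^2 * (B * C))
        = (k+1) * A + (k^2 + 2 * k) * (B * C) := by ring
      _ ≤ (k+1) * A + (k+1)^2 * (B*C) := by
        gcongr
        rw [add_sq]; simp

lemma iid3 (hW : ∑' a, w a = 1) (f : α → ℝ≥0∞) (k : ℕ) :
    ∑' v : Fin (k+1) → α, wt w v * f (v 0) = ∑' a, w a * f a := by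
  rw [tsum_cons]
  simp_rw [wt_cons, Fin.cons_zero]
  refine tsum_congr fun a => ?_
  rw [ENNReal.tsum_mul_right, ENNReal.tsum_mul_left, iid0, hW, one_pow, mul_one]

end iid

section gw
variable {d : ℕ} (p : PMF ℕ)

def treeW : ET (Stp d) → ℝ≥0∞
  | ET.node k _ c => p k * ∏ i, (c0 d * treeW (c i))

def bw : ET (Stp d) → ℝ≥0∞
  | ET.node k _ c => ((k + 1 : ℕ) : ℝ≥0∞) * p (k+1) * ∏ i, (c0 d * treeW p (c i))

def sw (a : Stp d × ET (Stp d)) : ℝ≥0∞ := c0 d * treeW p a.2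

lemma treeW_node (k : ℕ) (v : Fin k → Stp d × ET (Stp d)) :
    treeW p (ET.node k (fun i => (v i).1) (fun i => (v i).2)) = p k * wt (sw p) v := by
  simp [treeW, wt, sw]

lemma bw_node (k : ℕ) (v : Fin k → Stp d × ET (Stp d)) :
    bw p (ET.node k (fun i => (v i).1) (fun i => (v i).2)) = ((k + 1 : ℕ) : ℝ≥0∞) * p (k+1) * wt (sw p) v := by
  simp [bw, wt, sw]

lemma sw_sum (hd : 0 < d) : ∑' a : Stp d × ET (Stp d), sw p a = ∑' T : ET (Stp d), treeW p T := by
  rw [ENNReal.tsum_prod', tsum_fintype]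
  unfold sw
  simp only [ENNReal.tsum_mul_left]
  rw [← Finset.sum_mul, card_c0 hd, one_mul]

lemma sw_Pop (f : Zd d → ET (Stp d) → ℝ≥0∞) (x : Zd d) :
    ∑' a : Stp d × ET (Stp d), sw p a * f (x + vec a.1) a.2
      = Pop (fun z => ∑' T, treeW p T * f z T) x := by
  rw [ENNReal.tsum_prod', tsum_fintype]
  unfold sw Pop
  refine Finset.sum_congr rfl fun s _ => ?_
  simp only [mul_assoc]
  rw [ENNReal.tsum_mul_left]

/-- indicator of height `< h` -/
def alive : ℕ → ET (Stp d) → ℝ≥0∞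
  | 0, _ => 0
  | h + 1, ET.node _ _ c => ∏ i, alive h (c i)

lemma alive_ev (T : ET (Stp d)) : ∃ h0, ∀ h ≥ h0, alive h T = 1 := by
  induction T with
  | node k s c ih =>
    choose f hf using ih
    refine ⟨Finset.univ.sup f + 1, fun h hh => ?_⟩
    obtain ⟨h, rfl⟩ : ∃ h', h = h' + 1 := ⟨h - 1, by omega⟩
    simp only [alive]
    refine Finset.prod_eq_one fun i _ => hf i h ?_
    have := Finset.le_sup (f := f) (Finset.mem_univ i)
    omega

lemma alive_sum (hd : 0 < d) (h : ℕ) : ∑' T : ET (Stp d), treeW p T * alive h T ≤ 1 := by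
  induction h with
  | zero => simp [alive]
  | succ h ih =>
    rw [tsum_ET]
    have h1 : ∀ k, ∑' v : Fin k → Stp d × ET (Stp d), treeW p (ET.node k (fun i => (v i).1) (fun i => (v i).2))
        * alive (h+1) (ET.node k (fun i => (v i).1) (fun i => (v i).2)) ≤ p k := by
      intro k
      simp_rw [treeW_node, alive, wt, mul_assoc, ← Finset.prod_mul_distrib]
      rw [ENNReal.tsum_mul_left]
      have := iid0 (fun a : Stp d × ET (Stp d) => sw p a * alive h a.2) k
      unfold wt at this
      rw [this, ENNReal.tsum_prod', tsum_fintype]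
      have h2 : ∑ s : Stp d, ∑' T, sw p (s, T) * alive h T ≤ 1 := by
        unfold sw
        simp only [mul_assoc]
        simp_rw [ENNReal.tsum_mul_left]
        rw [← Finset.sum_mul, card_c0 hd, one_mul]; exact ih
      calc p k * _ ≤ p k * 1 := by gcongr; exact pow_le_one₀ (by simp) h2
        _ = p k := mul_one _
    exact (ENNReal.tsum_le_tsum h1).trans (le_of_eq p.tsum_coe)

lemma treeW_sum_le (hd : 0 < d) : ∑' T : ET (Stp d), treeW p T ≤ 1 := by
  rw [ENNReal.tsum_eq_iSup_sum]
  refine iSup_le fun s => ?_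
  choose f hf using alive_ev (d := d)
  refine le_trans ?_ (alive_sum p hd (s.sup f))
  refine le_trans (Finset.sum_le_sum fun T hT => ?_) (ENNReal.sum_le_tsum s)
  rw [hf T _ (Finset.le_sup hT), mul_one]

/-- truncated occupation -/
def occ : ℕ → ET (Stp d) → Zd d → Zd d → ℝ≥0∞
  | 0, _, _, _ => 0
  | h + 1, ET.node _ s c, x, y => dl y x + ∑ i, occ h (c i) (x + vec (s i)) y

def GG : ℕ → Zd d → Zd d → ℝ≥0∞
  | 0, _, _ => 0
  | h + 1, x, y => dl y x + Pop (fun z => GG h z y) x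

def MM (h : ℕ) (x y y' : Zd d) : ℝ≥0∞ := ∑' T : ET (Stp d), treeW p T * (occ h T x y * occ h T x y')

variable {p}

lemma occ_mean (hd : 0 < d) (hmean : ∑' k : ℕ, (k : ℝ≥0∞) * p k = 1)
    (hW : ∑' T : ET (Stp d), treeW p T = 1) (h : ℕ) (x y : Zd d) :
    ∑' T : ET (Stp d), treeW p T * occ h T x y = GG h x y := by
  have hS : ∑' a : Stp d × ET (Stp d), sw p a = 1 := by rw [sw_sum p hd, hW]
  induction h generalizing x with
  | zero => simp [occ, GG]
  | succ h ih =>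
    rw [tsum_ET]
    simp_rw [treeW_node, occ, mul_assoc, ENNReal.tsum_mul_left, mul_add, ENNReal.tsum_add, ENNReal.tsum_mul_right,
      iid0, hS, one_pow, one_mul]
    have e : ∀ k : ℕ, ∑' v : Fin k → Stp d × ET (Stp d), wt (sw p) v * ∑ i, occ h (v i).2 (x + vec (v i).1) y
        = k * Pop (fun z => GG h z y) x := by
      intro k
      rw [iid1 (sw p) hS (fun a => occ h a.2 (x + vec a.1) y), sw_Pop p (fun z T => occ h T z y)]
      simp_rw [ih]
    simp_rw [e, mul_add, ENNReal.tsum_add]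
    rw [ENNReal.tsum_mul_right, p.tsum_coe, one_mul]
    simp_rw [← mul_assoc]
    rw [ENNReal.tsum_mul_right]
    simp_rw [mul_comm (p _)]
    rw [hmean, one_mul]; rfl

lemma occ_second (hd : 0 < d) (hmean : ∑' k : ℕ, (k : ℝ≥0∞) * p k = 1)
    (hW : ∑' T : ET (Stp d), treeW p T = 1) (h : ℕ) (x y y' : Zd d) :
    MM p (h+1) x y y' ≤ Pop (fun z => MM p h z y y') x
      + (1 + ∑' k : ℕ, (k:ℝ≥0∞)^2 * p k) * (GG (h+1) x y * GG (h+1) x y') := by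
  have hS : ∑' a : Stp d × ET (Stp d), sw p a = 1 := by rw [sw_sum p hd, hW]
  unfold MM
  rw [tsum_ET]
  simp_rw [treeW_node, occ]
  set D := dl y x
  set D' := dl y' x
  set A := Pop (fun z => GG h z y) x with hA
  set A' := Pop (fun z => GG h z y') x with hA'
  have m1 : ∑' a : Stp d × ET (Stp d), sw p a * occ h a.2 (x + vec a.1) y = A := by
    rw [sw_Pop p (fun z T => occ h T z y)]; simp_rw [occ_mean hd hmean hW]; rfl
  have m2 : ∑' a : Stp d × ET (Stp d), sw p a * occ h a.2 (x + vec a.1) y' = A' := by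
    rw [sw_Pop p (fun z T => occ h T z y')]; simp_rw [occ_mean hd hmean hW]; rfl
  set Q := Pop (fun z => ∑' T, treeW p T * (occ h T z y * occ h T z y')) x with hQ
  have m3 : ∑' a : Stp d × ET (Stp d), sw p a * (occ h a.2 (x + vec a.1) y * occ h a.2 (x + vec a.1) y') = Q := by
    rw [sw_Pop p (fun z T => occ h T z y * occ h T z y')]
  have e : ∀ k : ℕ, ∑' v : Fin k → Stp d × ET (Stp d), p k * wt (sw p) v *
      ((D + ∑ i, occ h (v i).2 (x + vec (v i).1) y) * (D' + ∑ i, occ h (v i).2 (x + vec (v i).1) y'))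
      ≤ p k * (D * D') + (k * p k) * (D * A' + D' * A + Q) + ((k:ℝ≥0∞)^2 * p k) * (A * A') := by
    intro k
    have h0 : ∀ v : Fin k → Stp d × ET (Stp d), p k * wt (sw p) v *
      ((D + ∑ i, occ h (v i).2 (x + vec (v i).1) y) * (D' + ∑ i, occ h (v i).2 (x + vec (v i).1) y'))
      = (p k * (D * D')) * wt (sw p) v
        + (p k * D) * (wt (sw p) v * ∑ i, occ h (v i).2 (x + vec (v i).1) y')
        + (p k * D') * (wt (sw p) v * ∑ i, occ h (v i).2 (x + vec (v i).1) y)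
        + p k * (wt (sw p) v * ((∑ i, occ h (v i).2 (x + vec (v i).1) y) * (∑ i, occ h (v i).2 (x + vec (v i).1) y'))) := by
      intro v; ring
    simp_rw [h0, ENNReal.tsum_add, ENNReal.tsum_mul_left]
    have i1 := iid1 (sw p) hS (fun a => occ h a.2 (x + vec a.1) y) k
    have i2 := iid1 (sw p) hS (fun a => occ h a.2 (x + vec a.1) y') k
    have i3 := iid2 (sw p) hS (fun a => occ h a.2 (x + vec a.1) y) (fun a => occ h a.2 (x + vec a.1) y') k
    rw [m1] at i1; rw [m2] at i2; rw [m1, m2, m3] at i3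
    rw [i1, i2, iid0, hS]
    refine (add_le_add_right (mul_le_mul_right i3 _) _).trans (le_of_eq ?_)
    ring
  refine (ENNReal.tsum_le_tsum e).trans ?_
  rw [ENNReal.tsum_add, ENNReal.tsum_add, ENNReal.tsum_mul_right, ENNReal.tsum_mul_right, ENNReal.tsum_mul_right,
    p.tsum_coe, hmean]
  simp only [GG]
  set m := ∑' k : ℕ, (k:ℝ≥0∞)^2 * p k
  change _ ≤ Q + (1+m) * ((D + A) * (D' + A'))
  calc 1 * (D * D') + 1 * (D * A' + D' * A + Q) + m * (A * A')
      ≤ 1 * (D * D') + 1 * (D * A' + D' * A + Q) + m * (A * A') + (A * A' + m * (D * D' + D * A' + A * D')) := le_self_add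
    _ = _ := by ring

/-- size-biased mean -/
lemma sb_sum (hmean : ∑' k : ℕ, (k : ℝ≥0∞) * p k = 1) : ∑' k : ℕ, ((k + 1 : ℕ) : ℝ≥0∞) * p (k+1) = 1 := by
  rw [tsum_eq_zero_add' ENNReal.summable] at hmean
  simpa using hmean

lemma bw_sum (hd : 0 < d) (hmean : ∑' k : ℕ, (k : ℝ≥0∞) * p k = 1)
    (hW : ∑' T : ET (Stp d), treeW p T = 1) : ∑' T : ET (Stp d), bw p T = 1 := by
  have hS : ∑' a : Stp d × ET (Stp d), sw p a = 1 := by rw [sw_sum p hd, hW]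
  rw [tsum_ET]
  simp_rw [bw_node, ENNReal.tsum_mul_left, iid0, hS, one_pow, mul_one]
  exact sb_sum hmean

lemma bw_occ (hd : 0 < d) (hmean : ∑' k : ℕ, (k : ℝ≥0∞) * p k = 1)
    (hW : ∑' T : ET (Stp d), treeW p T = 1) (h : ℕ) (x y : Zd d) :
    ∑' T : ET (Stp d), bw p T * occ h T x y ≤ (1 + ∑' k : ℕ, (k:ℝ≥0∞)^2 * p k) * GG h x y := by
  have hS : ∑' a : Stp d × ET (Stp d), sw p a = 1 := by rw [sw_sum p hd, hW]
  cases h with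
  | zero => simp [occ]
  | succ h =>
    rw [tsum_ET]
    simp_rw [bw_node, occ, mul_assoc, ENNReal.tsum_mul_left, mul_add, ENNReal.tsum_add, ENNReal.tsum_mul_right,
      iid0, hS, one_pow, one_mul]
    have e : ∀ k : ℕ, ∑' v : Fin k → Stp d × ET (Stp d), wt (sw p) v * ∑ i, occ h (v i).2 (x + vec (v i).1) y
        = k * Pop (fun z => GG h z y) x := by
      intro k
      rw [iid1 (sw p) hS (fun a => occ h a.2 (x + vec a.1) y), sw_Pop p (fun z T => occ h T z y)]
      simp_rw [occ_mean hd hmean hW]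
    simp_rw [e, mul_add, ENNReal.tsum_add, ← mul_assoc]
    rw [ENNReal.tsum_mul_right, sb_sum hmean, one_mul, ENNReal.tsum_mul_right]
    have h2 : ∑' k : ℕ, ((k + 1 : ℕ) : ℝ≥0∞) * p (k+1) * k ≤ ∑' k : ℕ, (k:ℝ≥0∞)^2 * p k := by
      rw [tsum_eq_zero_add' (f := fun k : ℕ => (k:ℝ≥0∞)^2 * p k) ENNReal.summable]
      refine le_trans (ENNReal.tsum_le_tsum fun k => ?_) le_add_self
      rw [sq, mul_right_comm]
      gcongr
      omega
    simp only [GG]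
    set m := ∑' k : ℕ, (k:ℝ≥0∞)^2 * p k
    set A := Pop (fun z => GG h z y) x
    calc _ ≤ dl y x + m * A := by gcongr
      _ ≤ dl y x + m * A + (A + m * dl y x) := le_self_add
      _ = _ := by ring

def fst1 (f : Stp d × ET (Stp d) → ℝ≥0∞) : ET (Stp d) → ℝ≥0∞
  | ET.node k s c => if hk : 0 < k then f (s ⟨0, hk⟩, c ⟨0, hk⟩) else 0

lemma fst1_mul (f g : Stp d × ET (Stp d) → ℝ≥0∞) (T : ET (Stp d)) :
    fst1 f T * fst1 g T = fst1 (fun a => f a * g a) T := by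
  cases T with
  | node k s c => simp only [fst1]; split_ifs <;> simp

variable (p) in
def qq : ℝ≥0∞ := ∑' k : ℕ, ((k + 2 : ℕ) : ℝ≥0∞) * p (k+2)

lemma fst1_sum (hd : 0 < d) (hW : ∑' T : ET (Stp d), treeW p T = 1) (f : Stp d × ET (Stp d) → ℝ≥0∞) :
    ∑' T : ET (Stp d), bw p T * fst1 f T = qq p * ∑' a, sw p a * f a := by
  have hS : ∑' a : Stp d × ET (Stp d), sw p a = 1 := by rw [sw_sum p hd, hW]
  rw [tsum_ET, tsum_eq_zero_add' ENNReal.summable]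
  have h0 : ∑' v : Fin 0 → Stp d × ET (Stp d), bw p (ET.node 0 (fun i => (v i).1) (fun i => (v i).2))
    * fst1 f (ET.node 0 (fun i => (v i).1) (fun i => (v i).2)) = 0 := by simp [fst1]
  rw [h0, zero_add]
  unfold qq
  rw [← ENNReal.tsum_mul_right]
  refine tsum_congr fun k => ?_
  simp_rw [bw_node, fst1, mul_assoc, ENNReal.tsum_mul_left]
  rw [← iid3 (sw p) hS f k]
  simp only [Nat.succ_pos, dite_true]
  rfl
end gw

/-! #### Half-walks decorated with bushes -/

section half
variable {d : ℕ} (p : PMF ℕ)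

abbrev HA (d : ℕ) := Stp d × ET (Stp d)

def hwt (a : HA d) : ℝ≥0∞ := c0 d * bw p a.2

def pre {n : ℕ} (v : Fin n → HA d) (i : ℕ) : Zd d := ∑ j : Fin n, if j.val < i then vec (v j).1 else 0

lemma pre_zero {n : ℕ} (v : Fin n → HA d) : pre v 0 = 0 := by simp [pre]

lemma pre_cons {n : ℕ} (a : HA d) (v : Fin n → HA d) (i : ℕ) :
    pre (Fin.cons a v : Fin (n+1) → HA d) (i+1) = vec a.1 + pre v i := by
  unfold pre
  rw [Fin.sum_univ_succ]
  simp

variable {p} (b b' : ET (Stp d) → Zd d → ℝ≥0∞)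

/-- `b T x` : a functional (with the target point already fixed) of the bush `T` rooted at `x`. -/
def hocc (r : ℕ) {n : ℕ} (v : Fin n → HA d) (x : Zd d) : ℝ≥0∞ :=
  ∑ i : Fin n, if r ≤ i.val then b (v i).2 (x + pre v (i.val + 1)) else 0

lemma hocc_succ (r : ℕ) {n : ℕ} (a : HA d) (v : Fin n → HA d) (x : Zd d) :
    hocc b (r+1) (Fin.cons a v : Fin (n+1) → HA d) x = hocc b r v (x + vec a.1) := by
  unfold hocc
  rw [Fin.sum_univ_succ]
  simp [pre_cons, add_assoc]

lemma hocc_zero {n : ℕ} (a : HA d) (v : Fin n → HA d) (x : Zd d) :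
    hocc b 0 (Fin.cons a v : Fin (n+1) → HA d) x = b a.2 (x + vec a.1) + hocc b 0 v (x + vec a.1) := by
  unfold hocc
  rw [Fin.sum_univ_succ]
  simp [pre_cons, pre_zero, add_assoc]

lemma hwt_Pop (f : Zd d → ET (Stp d) → ℝ≥0∞) (x : Zd d) :
    ∑' a : HA d, hwt p a * f (x + vec a.1) a.2 = Pop (fun z => ∑' T, bw p T * f z T) x := by
  rw [ENNReal.tsum_prod', tsum_fintype]
  unfold hwt Pop
  refine Finset.sum_congr rfl fun s _ => ?_
  simp only [mul_assoc]
  rw [ENNReal.tsum_mul_left]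

lemma hwt_sum (hd : 0 < d) : ∑' a : HA d, hwt p a = ∑' T : ET (Stp d), bw p T := by
  rw [ENNReal.tsum_prod', tsum_fintype]
  unfold hwt
  simp only [ENNReal.tsum_mul_left]
  rw [← Finset.sum_mul, card_c0 hd, one_mul]

variable (p) in
def Eh (r n : ℕ) (x : Zd d) : ℝ≥0∞ := ∑' v : Fin n → HA d, wt (hwt p) v * hocc b r v x

variable (p) in
def Qh (r n : ℕ) (x : Zd d) : ℝ≥0∞ := ∑' v : Fin n → HA d, wt (hwt p) v * (hocc b r v x * hocc b' r v x)

lemma Pop_add (f g : Zd d → ℝ≥0∞) : Pop (fun z => f z + g z) = fun z => Pop f z + Pop g z := by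
  funext x; unfold Pop; rw [← Finset.sum_add_distrib]; simp_rw [mul_add]

lemma Eh_shift (hB : ∑' T : ET (Stp d), bw p T = 1) (r n : ℕ) (x : Zd d) :
    Eh p b (r+1) (n+1) x = Pop (Eh p b r n) x := by
  unfold Eh
  rw [tsum_cons]
  simp_rw [wt_cons, hocc_succ, mul_assoc, ENNReal.tsum_mul_left]
  rw [hwt_Pop (p := p) (fun z _ => ∑' v : Fin n → HA d, wt (hwt p) v * hocc b r v z)]
  simp_rw [ENNReal.tsum_mul_right, hB, one_mul]

lemma Qh_shift (hB : ∑' T : ET (Stp d), bw p T = 1) (r n : ℕ) (x : Zd d) :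
    Qh p b b' (r+1) (n+1) x = Pop (Qh p b b' r n) x := by
  unfold Qh
  rw [tsum_cons]
  simp_rw [wt_cons, hocc_succ, mul_assoc, ENNReal.tsum_mul_left]
  rw [hwt_Pop (p := p) (fun z _ => ∑' v : Fin n → HA d, wt (hwt p) v * (hocc b r v z * hocc b' r v z))]
  simp_rw [ENNReal.tsum_mul_right, hB, one_mul]

lemma Eh_step (hd : 0 < d) (hB : ∑' T : ET (Stp d), bw p T = 1) (n : ℕ) (x : Zd d) :
    Eh p b 0 (n+1) x = Pop (fun z => ∑' T, bw p T * b T z + Eh p b 0 n z) x := by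
  have hS : ∑' a : HA d, hwt p a = 1 := by rw [hwt_sum hd, hB]
  unfold Eh
  rw [tsum_cons]
  simp_rw [wt_cons, hocc_zero, mul_assoc, ENNReal.tsum_mul_left, mul_add, ENNReal.tsum_add, ENNReal.tsum_mul_right,
    iid0, hS, one_pow, one_mul]
  simp_rw [mul_add, ENNReal.tsum_add]
  rw [Pop_add, hwt_Pop (p := p) (fun z T => b T z),
    hwt_Pop (p := p) (fun z _ => ∑' v : Fin n → HA d, wt (hwt p) v * hocc b 0 v z)]
  simp_rw [ENNReal.tsum_mul_right, hB, one_mul]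

lemma Qh_step (hd : 0 < d) (hB : ∑' T : ET (Stp d), bw p T = 1) (n : ℕ) (x : Zd d) :
    Qh p b b' 0 (n+1) x = Pop (fun z => (∑' T, bw p T * (b T z * b' T z)
      + (∑' T, bw p T * b T z) * Eh p b' 0 n z + (∑' T, bw p T * b' T z) * Eh p b 0 n z) + Qh p b b' 0 n z) x := by
  have hS : ∑' a : HA d, hwt p a = 1 := by rw [hwt_sum hd, hB]
  unfold Qh
  rw [tsum_cons]
  simp_rw [wt_cons, hocc_zero]
  have h0 : ∀ (a : HA d) (v : Fin n → HA d), hwt p a * wt (hwt p) v *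
      ((b a.2 (x + vec a.1) + hocc b 0 v (x + vec a.1)) * (b' a.2 (x + vec a.1) + hocc b' 0 v (x + vec a.1)))
      = hwt p a * ((b a.2 (x + vec a.1) * b' a.2 (x + vec a.1)) * wt (hwt p) v
        + b a.2 (x + vec a.1) * (wt (hwt p) v * hocc b' 0 v (x + vec a.1))
        + b' a.2 (x + vec a.1) * (wt (hwt p) v * hocc b 0 v (x + vec a.1))
        + wt (hwt p) v * (hocc b 0 v (x + vec a.1) * hocc b' 0 v (x + vec a.1))) := by
    intro a v; ring
  simp_rw [h0, ENNReal.tsum_mul_left, ENNReal.tsum_add, ENNReal.tsum_mul_left, iid0, hS, one_pow, mul_one]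
  rw [hwt_Pop (p := p) (fun z T => b T z * b' T z + b T z * (∑' v : Fin n → HA d, wt (hwt p) v * hocc b' 0 v z)
     + b' T z * (∑' v : Fin n → HA d, wt (hwt p) v * hocc b 0 v z)
     + ∑' v : Fin n → HA d, wt (hwt p) v * (hocc b 0 v z * hocc b' 0 v z))]
  congr 1
  funext z
  simp_rw [mul_add, ENNReal.tsum_add, ← mul_assoc, ENNReal.tsum_mul_right, hB, one_mul]
  rfl

lemma Pop_sum {ι : Type} (s : Finset ι) (f : ι → Zd d → ℝ≥0∞) (x : Zd d) :
    Pop (fun z => ∑ i ∈ s, f i z) x = ∑ i ∈ s, Pop (f i) x := by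
  unfold Pop; simp_rw [Finset.mul_sum]; rw [Finset.sum_comm]

lemma Popn_sum {ι : Type} (n : ℕ) (s : Finset ι) (f : ι → Zd d → ℝ≥0∞) (x : Zd d) :
    (Pop^[n] (fun z => ∑ i ∈ s, f i z)) x = ∑ i ∈ s, (Pop^[n] (f i)) x := by
  simp_rw [Popn_eq, Finset.mul_sum]
  rw [Summable.tsum_finsetSum fun _ _ => ENNReal.summable]

lemma Popn_const (n : ℕ) (c : ℝ≥0∞) (f : Zd d → ℝ≥0∞) (x : Zd d) :
    (Pop^[n] (fun z => c * f z)) x = c * (Pop^[n] f) x := by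
  simp_rw [Popn_eq, mul_left_comm _ c, ENNReal.tsum_mul_left]

/-- solving the recursion `F (n+1) = Pop (g + F n)` in inequality form -/
lemma rec_le (F : ℕ → Zd d → ℝ≥0∞) (g : Zd d → ℝ≥0∞) (m : ℕ) (h0 : ∀ x, F 0 x = 0)
    (hF : ∀ n < m, ∀ x, F (n+1) x ≤ Pop (fun z => g z + F n z) x) (n : ℕ) (hn : n ≤ m) (x : Zd d) :
    F n x ≤ ∑ i ∈ Finset.range n, (Pop^[i+1] g) x := by
  induction n generalizing x with
  | zero => simp [h0]
  | succ n ih =>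
    refine (hF n hn x).trans ?_
    refine (Pop_mono (fun z => add_le_add_right (ih (by omega) z) _) x).trans ?_
    rw [Pop_add]
    simp only
    rw [Pop_sum, Finset.sum_range_succ', add_comm]
    simp only [Function.iterate_succ_apply', Function.iterate_zero, id]
    exact le_rfl

lemma rec_eq (F : ℕ → Zd d → ℝ≥0∞) (g : Zd d → ℝ≥0∞) (h0 : ∀ x, F 0 x = 0)
    (hF : ∀ n, ∀ x, F (n+1) x = Pop (fun z => g z + F n z) x) (n : ℕ) (x : Zd d) :
    F n x = ∑ i ∈ Finset.range n, (Pop^[i+1] g) x := by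
  induction n generalizing x with
  | zero => simp [h0]
  | succ n ih =>
    rw [hF, Pop_add]
    simp only
    simp_rw [funext ih]
    rw [Pop_sum, Finset.sum_range_succ', add_comm]
    simp only [Function.iterate_succ_apply', Function.iterate_zero, id]

lemma Eh_eq (hd : 0 < d) (hB : ∑' T : ET (Stp d), bw p T = 1) (r n : ℕ) (x : Zd d) :
    Eh p b r (n + r) x = ∑ i ∈ Finset.range n, (Pop^[i+1+r] (fun z => ∑' T, bw p T * b T z)) x := by
  induction r generalizing x with
  | zero =>
    refine rec_eq (fun n => Eh p b 0 n) _ ?_ ?_ n x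
    · intro x; simp [Eh, hocc]
    · exact fun n x => Eh_step b hd hB n x
  | succ r ih =>
    rw [← add_assoc, Eh_shift b hB]
    simp_rw [funext ih]
    rw [Pop_sum]
    simp only [← add_assoc, Function.iterate_succ_apply']

lemma Qh_eq (hB : ∑' T : ET (Stp d), bw p T = 1) (r n : ℕ) (x : Zd d) :
    Qh p b b' r (n + r) x = (Pop^[r] (Qh p b b' 0 n)) x := by
  induction r generalizing x with
  | zero => rfl
  | succ r ih =>
    rw [← add_assoc, Qh_shift b b' hB]
    simp_rw [funext ih]
    rw [Function.iterate_succ_apply']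

lemma GG_eq (h : ℕ) (x y : Zd d) : GG h x y = ∑ j ∈ Finset.range h, pk j x y := by
  induction h generalizing x with
  | zero => simp [GG]
  | succ h ih =>
    rw [GG, Finset.sum_range_succ']
    simp_rw [ih]
    rw [Pop_sum, add_comm]
    simp_rw [pk_succ]
    rfl

lemma Popn_pk (n m : ℕ) (x y : Zd d) : (Pop^[n] (fun z => pk m z y)) x = pk (n+m) x y := by
  rw [Popn_eq, pk_conv]

lemma Popn_GG (n h : ℕ) (x y : Zd d) : (Pop^[n] (fun z => GG h z y)) x = ∑ j ∈ Finset.range h, pk (n+j) x y := by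
  simp_rw [GG_eq]
  rw [Popn_sum]
  simp_rw [Popn_pk]

lemma GG_mono {h h' : ℕ} (hh : h ≤ h') (x y : Zd d) : GG h x y ≤ GG h' x y := by
  simp_rw [GG_eq]
  exact Finset.sum_le_sum_of_subset (Finset.range_mono hh)

end half

/-! #### Elementary sums -/

lemma hk_le_mul4 (s : ℝ) (hs : 0 ≤ s) (n a b c e : ℕ) (ha : a ≤ n) (hb : b ≤ n) (hc : c ≤ n) (he : e ≤ n) :
    hk (4 * s) n ≤ hk s a * hk s b * hk s c * hk s e := by
  have key : ∀ m : ℕ, m ≤ n → hk s n ≤ hk s m := by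
    intro m hm
    unfold hk
    refine ENNReal.ofReal_le_ofReal ?_
    have : (m:ℝ) ≤ n := by exact_mod_cast hm
    exact Real.rpow_le_rpow_of_nonpos (by positivity) (by linarith) (by linarith)
  have e4 : hk (4 * s) n = hk s n * hk s n * hk s n * hk s n := by
    unfold hk
    have hp : 0 < (n:ℝ) + 1 := by positivity
    rw [← ENNReal.ofReal_mul (by positivity), ← ENNReal.ofReal_mul (by positivity), ← ENNReal.ofReal_mul (by positivity),
      ← Real.rpow_add hp, ← Real.rpow_add hp, ← Real.rpow_add hp]
    congr 2; ring
  rw [e4]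
  gcongr
  · exact key a ha
  · exact key b hb
  · exact key c hc
  · exact key e he

lemma sum_lt_one (s : ℝ) (hs0 : 0 < s) (hs : s < 1) (K : ℕ) :
    ∑ j ∈ Finset.range K, ((j:ℝ)+1)^(-s) ≤ (1-s)⁻¹ * (K:ℝ)^(1-s) := by
  have h1 : 0 < 1 - s := by linarith
  induction K with
  | zero => simp [Real.zero_rpow h1.ne']
  | succ K ih =>
    rw [Finset.sum_range_succ]
    have hp : (0:ℝ) < (K:ℝ) + 1 := by positivity
    have hb := rpow_one_add_le_one_add_mul_self (s := -(1/((K:ℝ)+1))) (p := 1 - s)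
      (by rw [neg_le_neg_iff, div_le_one hp]; linarith [Nat.cast_nonneg (α := ℝ) K]) h1.le (by linarith)
    have e1 : 1 + -(1/((K:ℝ)+1)) = K / ((K:ℝ)+1) := by field_simp; ring
    rw [e1, Real.div_rpow (by positivity) hp.le, div_le_iff₀ (by positivity)] at hb
    have e2 : ((K:ℝ)+1)^(1-s) = ((K:ℝ)+1)^(-s) * ((K:ℝ)+1) := by
      rw [← Real.rpow_add_one hp.ne']; congr 1; ring
    have e3 : (1 + (1 - s) * -(1/((K:ℝ)+1))) * ((K:ℝ)+1)^(1-s)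
        = ((K:ℝ)+1)^(1-s) - (1-s) * ((K:ℝ)+1)^(-s) := by
      rw [e2]; field_simp; ring
    rw [e3] at hb
    push_cast
    refine (add_le_add_left ih _).trans ?_
    have : (1-s)⁻¹ * (((K:ℝ)+1)^(1-s) - (1-s) * ((K:ℝ)+1)^(-s)) = (1-s)⁻¹ * ((K:ℝ)+1)^(1-s) - ((K:ℝ)+1)^(-s) := by
      rw [mul_sub, ← mul_assoc, inv_mul_cancel₀ h1.ne', one_mul]
    have h4 := mul_le_mul_of_nonneg_left hb (inv_nonneg.2 h1.le)
    rw [this] at h4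
    linarith

lemma tele_gt (s : ℝ) (hs : 1 < s) (k : ℝ) (hk1 : 1 ≤ k) :
    k^(-s) ≤ 2^s * (s-1)⁻¹ * (k^(1-s) - (k+1)^(1-s)) := by
  have hkp : 0 < k := by linarith
  have hp : 0 < k + 1 := by linarith
  have h1 : 0 < s - 1 := by linarith
  -- k^(1-s) ≥ (k+1)^(1-s) + (s-1) (k+1)^(-s)
  have a1 : (k+1)^(1-s) + (s-1) * (k+1)^(-s) ≤ k^(1-s) := by
    have hx : 0 < k/(k+1) := by positivity
    have b1 : 1 + (s-1) * (1/(k+1)) ≤ (k/(k+1))^(1-s) := by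
      rw [Real.rpow_def_of_pos hx]
      have l1 : Real.log (k/(k+1)) ≤ k/(k+1) - 1 := Real.log_le_sub_one_of_pos hx
      have l2 : k/(k+1) - 1 = -(1/(k+1)) := by field_simp; ring
      have l3 := Real.add_one_le_exp (Real.log (k/(k+1)) * (1-s))
      nlinarith
    rw [Real.div_rpow hkp.le hp.le, le_div_iff₀ (by positivity)] at b1
    have e2 : (k+1)^(1-s) = (k+1)^(-s) * (k+1) := by
      rw [← Real.rpow_add_one hp.ne']; congr 1; ring
    refine le_trans (le_of_eq ?_) b1
    rw [e2]; field_simp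
  have a2 : k^(-s) ≤ 2^s * (k+1)^(-s) := by
    have : (2*k)^(-s) ≤ (k+1)^(-s) := Real.rpow_le_rpow_of_nonpos hp (by linarith) (by linarith)
    rw [Real.mul_rpow (by norm_num) hkp.le, Real.rpow_neg (by norm_num : (0:ℝ) ≤ 2)] at this
    have h2 : (0:ℝ) < 2^s := by positivity
    calc k^(-s) = 2^s * ((2^s)⁻¹ * k^(-s)) := by field_simp
      _ ≤ _ := by gcongr
  calc k^(-s) ≤ 2^s * (k+1)^(-s) := a2
    _ = 2^s * (s-1)⁻¹ * ((s-1) * (k+1)^(-s)) := by field_simp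
    _ ≤ _ := by gcongr; linarith

lemma sum_gt_one (s : ℝ) (hs : 1 < s) (r m : ℕ) :
    ∑ i ∈ Finset.range m, (((r+i : ℕ):ℝ)+1)^(-s) ≤ 2^s * (s-1)⁻¹ * ((r:ℝ)+1)^(1-s) := by
  have : ∑ i ∈ Finset.range m, (((r+i : ℕ):ℝ)+1)^(-s)
      ≤ 2^s * (s-1)⁻¹ * (((r:ℝ)+1)^(1-s) - ((r:ℝ)+1+m)^(1-s)) := by
    induction m with
    | zero => simp
    | succ m ih =>
      rw [Finset.sum_range_succ]
      have := tele_gt s hs ((r:ℝ)+m+1) (by linarith [Nat.cast_nonneg (α := ℝ) r, Nat.cast_nonneg (α := ℝ) m])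
      push_cast at *
      rw [show (r:ℝ)+1+m = r+m+1 by ring] at ih
      rw [show (r:ℝ)+1+(m+1) = r+m+1+1 by ring]
      linarith
  refine this.trans ?_
  have h1 : 0 < s - 1 := by linarith
  gcongr
  have : 0 ≤ ((r:ℝ)+1+m)^(1-s) := by positivity
  linarith

lemma hk_sum_lt (s : ℝ) (hs0 : 0 < s) (hs : s < 1) (K : ℕ) :
    ∑ j ∈ Finset.range K, hk s j ≤ ENNReal.ofReal ((1-s)⁻¹ * (K:ℝ)^(1-s)) := by
  unfold hk
  rw [← ENNReal.ofReal_sum_of_nonneg fun _ _ => by positivity]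
  exact ENNReal.ofReal_le_ofReal (sum_lt_one s hs0 hs K)

lemma hk_sum_gt (s : ℝ) (hs : 1 < s) (r m : ℕ) :
    ∑ i ∈ Finset.range m, hk s (r+i) ≤ ENNReal.ofReal (2^s * (s-1)⁻¹ * ((r:ℝ)+1)^(1-s)) := by
  unfold hk
  rw [← ENNReal.ofReal_sum_of_nonneg fun _ _ => by positivity]
  exact ENNReal.ofReal_le_ofReal (sum_gt_one s hs r m)

/-- inner products of heat kernels -/
lemma pk_inner {d : ℕ} (n m : ℕ) (z z' : Zd d) : ∑' y, pk n z y * pk m z' y = pk (n+m) z z' := by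
  rw [← pk_conv]
  simp_rw [pk_symm m z']

lemma sum4 {ι : Type} (s : Finset ι) (f g h k : ι → ℝ≥0∞) :
    ∑ a ∈ s, ∑ b ∈ s, ∑ c ∈ s, ∑ e ∈ s, f a * g b * h c * k e
      = (∑ a ∈ s, f a) * (∑ b ∈ s, g b) * (∑ c ∈ s, h c) * (∑ e ∈ s, k e) := by
  simp_rw [← Finset.mul_sum, ← Finset.sum_mul, ← Finset.mul_sum, ← Finset.sum_mul, ← Finset.mul_sum, ← Finset.sum_mul]

lemma tsum_inner_sum {d : ℕ} {ι κ : Type} (s : Finset ι) (t : Finset κ) (f : ι → ℕ) (g : κ → ℕ) (z z' : Zd d) :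
    ∑' y, (∑ i ∈ s, pk (f i) z y) * (∑ j ∈ t, pk (g j) z' y) = ∑ i ∈ s, ∑ j ∈ t, pk (f i + g j) z z' := by
  simp_rw [Finset.sum_mul_sum]
  rw [Summable.tsum_finsetSum fun _ _ => ENNReal.summable]
  refine Finset.sum_congr rfl fun i _ => ?_
  rw [Summable.tsum_finsetSum fun _ _ => ENNReal.summable]
  simp_rw [pk_inner]

/-! #### Moment estimates -/

lemma two_mul_le' (a b : ℝ≥0∞) : 2 * (a * b) ≤ a * a + b * b := by
  rcases le_total a b with h | h
  · obtain ⟨c, rfl⟩ := exists_add_of_le h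
    calc 2 * (a * (a + c)) ≤ 2 * (a * (a + c)) + c * c := le_self_add
      _ = _ := by ring
  · obtain ⟨c, rfl⟩ := exists_add_of_le h
    calc 2 * ((b + c) * b) ≤ 2 * ((b+c) * b) + c * c := le_self_add
      _ = _ := by ring

lemma wcs {ι : Type} (w f g : ι → ℝ≥0∞) :
    (∑' i, w i * (f i * g i)) ^ 2 ≤ (∑' i, w i * (f i * f i)) * (∑' i, w i * (g i * g i)) := by
  have e : ∀ F G : ι → ℝ≥0∞, (∑' i, F i) * (∑' j, G j) = ∑' i, ∑' j, F i * G j := by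
    intro F G
    rw [← ENNReal.tsum_mul_right]
    simp_rw [ENNReal.tsum_mul_left]
  have h2 : (2:ℝ≥0∞) * (∑' i, w i * (f i * g i)) ^ 2
      ≤ 2 * ((∑' i, w i * (f i * f i)) * (∑' i, w i * (g i * g i))) := by
    rw [sq, two_mul ((∑' i, w i * (f i * f i)) * _)]
    nth_rewrite 3 [mul_comm]
    rw [e, e, e, ← ENNReal.tsum_mul_left, ← ENNReal.tsum_add]
    refine ENNReal.tsum_le_tsum fun i => ?_
    rw [← ENNReal.tsum_mul_left, ← ENNReal.tsum_add]
    refine ENNReal.tsum_le_tsum fun j => ?_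
    calc 2 * (w i * (f i * g i) * (w j * (f j * g j))) = w i * w j * (2 * ((f i * g j) * (g i * f j))) := by ring
      _ ≤ w i * w j * ((f i * g j) * (f i * g j) + (g i * f j) * (g i * f j)) := by gcongr; exact two_mul_le' _ _
      _ = _ := by ring
  exact (ENNReal.mul_le_mul_iff_right (by norm_num) (by norm_num)).1 h2

section
variable {d : ℕ} {p : PMF ℕ}

def XX (b : ET (Stp d) → Zd d → Zd d → ℝ≥0∞) (r r' : ℕ) {n n' : ℕ} (v : Fin n → HA d) (v' : Fin n' → HA d) : ℝ≥0∞ :=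
  ∑' y, hocc (fun T x => b T x y) r v 0 * hocc (fun T x => b T x y) r' v' 0

lemma EX_eq (b : ET (Stp d) → Zd d → Zd d → ℝ≥0∞) (r r' n n' : ℕ) :
    ∑' v : Fin n → HA d, ∑' v' : Fin n' → HA d, wt (hwt p) v * wt (hwt p) v' * XX b r r' v v'
      = ∑' y, Eh p (fun T x => b T x y) r n 0 * Eh p (fun T x => b T x y) r' n' 0 := by
  unfold XX Eh
  simp_rw [← ENNReal.tsum_mul_left, ← ENNReal.tsum_mul_right]
  simp_rw [ENNReal.tsum_comm (β := Zd d)]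
  refine tsum_congr fun y => ?_
  rw [ENNReal.tsum_comm]
  refine tsum_congr fun v' => ?_
  refine tsum_congr fun v => ?_
  ring

lemma EX2_eq (b : ET (Stp d) → Zd d → Zd d → ℝ≥0∞) (r r' n n' : ℕ) :
    ∑' v : Fin n → HA d, ∑' v' : Fin n' → HA d, wt (hwt p) v * wt (hwt p) v' * (XX b r r' v v' * XX b r r' v v')
      = ∑' y, ∑' y', Qh p (fun T x => b T x y) (fun T x => b T x y') r n 0
          * Qh p (fun T x => b T x y) (fun T x => b T x y') r' n' 0 := by
  have e : ∀ (v : Fin n → HA d) (v' : Fin n' → HA d), wt (hwt p) v * wt (hwt p) v' * (XX b r r' v v' * XX b r r' v v')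
      = ∑' y, ∑' y', (wt (hwt p) v * (hocc (fun T x => b T x y) r v 0 * hocc (fun T x => b T x y') r v 0))
        * (wt (hwt p) v' * (hocc (fun T x => b T x y) r' v' 0 * hocc (fun T x => b T x y') r' v' 0)) := by
    intro v v'
    unfold XX
    rw [← ENNReal.tsum_mul_right, ← ENNReal.tsum_mul_left]
    refine tsum_congr fun y => ?_
    rw [← ENNReal.tsum_mul_left, ← ENNReal.tsum_mul_left]
    refine tsum_congr fun y' => ?_
    ring
  simp_rw [e]
  unfold Qh
  simp_rw [ENNReal.tsum_comm (α := Fin n' → HA d) (β := Zd d)]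
  rw [ENNReal.tsum_comm (β := Zd d)]
  refine tsum_congr fun y => ?_
  rw [ENNReal.tsum_comm (β := Zd d)]
  refine tsum_congr fun y' => ?_
  simp_rw [ENNReal.tsum_mul_left, ENNReal.tsum_mul_right]

lemma sum_shift_le (f : ℕ → ℝ≥0∞) (n c K : ℕ) (h : n + c ≤ K) :
    ∑ i ∈ Finset.range n, f (i + c) ≤ ∑ k ∈ Finset.range K, f k := by
  rw [← Finset.sum_image (f := f) (g := fun i => i + c) (s := Finset.range n) (by intro a _ b _ h; simpa using h)]
  refine Finset.sum_le_sum_of_subset ?_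
  intro k hk
  simp only [Finset.mem_image, Finset.mem_range] at *
  obtain ⟨a, ha, rfl⟩ := hk
  omega

/-- Part I : first moment bound. -/
lemma partI (hd : 9 ≤ d) (hmean : ∑' k : ℕ, (k : ℝ≥0∞) * p k = 1) (hm2 : ∑' k : ℕ, (k : ℝ≥0∞)^2 * p k ≠ ⊤)
    (hW : ∑' T : ET (Stp d), treeW p T = 1) : ∃ C : ℝ, 0 ≤ C ∧ ∀ r N : ℕ, r ≤ N →
    ∑' v : Fin N → HA d, ∑' v' : Fin N → HA d, wt (hwt p) v * wt (hwt p) v' * XX (occ N) 0 r v v'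
      ≤ ENNReal.ofReal (C * ((r:ℝ)+1)^(4 - (d:ℝ)/2)) := by
  have hd0 : 0 < d := by omega
  have hB := bw_sum hd0 hmean hW
  set m := 1 + ∑' k : ℕ, (k : ℝ≥0∞)^2 * p k with hm
  have hmt : m ≠ ⊤ := by simp [hm, hm2]
  set s : ℝ := (d:ℝ)/8 with hs
  have hs1 : 1 < s := by
    have : (9:ℝ) ≤ d := by exact_mod_cast hd
    rw [hs, lt_div_iff₀] <;> linarith
  have hs1' : 0 < s - 1 := by linarith
  set q : ℝ := 2^s * (s-1)⁻¹ with hq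
  have hq0 : 0 ≤ q := by positivity
  have hEh : ∀ (r N : ℕ) (y : Zd d), r ≤ N → Eh p (fun T x => occ N T x y) r N 0
      ≤ m * ∑ a ∈ Finset.range N ×ˢ Finset.range N, pk (a.1+1+r + a.2) 0 y := by
    intro r N y hr
    obtain ⟨n, rfl⟩ := Nat.exists_eq_add_of_le' hr
    rw [Eh_eq _ hd0 hB, Finset.sum_product, Finset.mul_sum]
    refine (Finset.sum_le_sum_of_subset (Finset.range_mono (Nat.le_add_right n r))).trans ?_
    refine Finset.sum_le_sum fun i _ => ?_
    simp only
    rw [← Popn_GG, ← Popn_const]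
    exact Popn_mono _ (fun z => bw_occ hd0 hmean hW _ _ _) _
  refine ⟨m.toReal^2 * (d:ℝ)^((d:ℝ)/2) * q^4, by positivity, fun r N hr => ?_⟩
  rw [EX_eq]
  refine (ENNReal.tsum_le_tsum fun y => mul_le_mul' (hEh 0 N y (Nat.zero_le _)) (hEh r N y hr)).trans ?_
  have e1 : ∀ y : Zd d, (m * ∑ a ∈ Finset.range N ×ˢ Finset.range N, pk (a.1+1+0 + a.2) 0 y)
    * (m * ∑ a ∈ Finset.range N ×ˢ Finset.range N, pk (a.1+1+r + a.2) 0 y)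
    = m^2 * ((∑ a ∈ Finset.range N ×ˢ Finset.range N, pk (a.1+1+0 + a.2) 0 y) *
      (∑ a ∈ Finset.range N ×ˢ Finset.range N, pk (a.1+1+r + a.2) 0 y)) := by intro y; ring
  simp_rw [e1]
  rw [ENNReal.tsum_mul_left, tsum_inner_sum]
  have e2 : ∀ a b : ℕ × ℕ, pk (a.1+1+0 + a.2 + (b.1+1+r + b.2)) (0 : Zd d) 0
      ≤ ENNReal.ofReal ((d:ℝ)^((d:ℝ)/2)) * (hk s (r + a.1) * hk s (r + a.2) * hk s (r + b.1) * hk s (r + b.2)) := by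
    intro a b
    refine (pk_le hd0 _ _ _).trans ?_
    gcongr
    rw [show (d:ℝ)/2 = 4 * s by rw [hs]; ring]
    exact hk_le_mul4 s (by linarith) _ _ _ _ _ (by omega) (by omega) (by omega) (by omega)
  refine (mul_le_mul_right (Finset.sum_le_sum fun a _ => Finset.sum_le_sum fun b _ => e2 a b) _).trans ?_
  simp_rw [← Finset.mul_sum]
  rw [Finset.sum_product]
  simp_rw [Finset.sum_product]
  rw [sum4]
  have e3 := hk_sum_gt s hs1 r N
  have e4 : (m:ℝ≥0∞)^2 = ENNReal.ofReal (m.toReal^2) := by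
    rw [ENNReal.ofReal_pow ENNReal.toReal_nonneg, ENNReal.ofReal_toReal hmt]
  calc m^2 * (ENNReal.ofReal ((d:ℝ)^((d:ℝ)/2)) * _)
      ≤ ENNReal.ofReal (m.toReal^2) * (ENNReal.ofReal ((d:ℝ)^((d:ℝ)/2)) *
        (ENNReal.ofReal (q * ((r:ℝ)+1)^(1-s)) * ENNReal.ofReal (q * ((r:ℝ)+1)^(1-s))
         * ENNReal.ofReal (q * ((r:ℝ)+1)^(1-s)) * ENNReal.ofReal (q * ((r:ℝ)+1)^(1-s)))) := by
        rw [e4]; gcongr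
    _ = _ := by
      have hp : 0 < (r:ℝ) + 1 := by positivity
      rw [← ENNReal.ofReal_mul (by positivity), ← ENNReal.ofReal_mul (by positivity), ← ENNReal.ofReal_mul (by positivity),
        ← ENNReal.ofReal_mul (by positivity), ← ENNReal.ofReal_mul (by positivity)]
      congr 1
      have e5 : ((r:ℝ)+1)^(4 - (d:ℝ)/2) = (((r:ℝ)+1)^(1-s))^4 := by
        rw [← Real.rpow_mul_natCast hp.le]; congr 1; rw [hs]; push_cast; ring
      rw [e5]; ring
end

/-! #### Part II : second moment method in low dimensions -/

section
variable {d : ℕ} {p : PMF ℕ}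

/-- functional counting the visits to `y` in the subtree of the first child of the root of a bush -/
def bb (L : ℕ) (T : ET (Stp d)) (x y : Zd d) : ℝ≥0∞ := fst1 (fun a => occ L a.2 (x + vec a.1) y) T

lemma bb_mean (hd : 0 < d) (hmean : ∑' k : ℕ, (k : ℝ≥0∞) * p k = 1)
    (hW : ∑' T : ET (Stp d), treeW p T = 1) (L : ℕ) (x y : Zd d) :
    ∑' T, bw p T * bb L T x y = qq p * ∑ j ∈ Finset.range L, pk (1 + j) x y := by
  unfold bb
  rw [fst1_sum hd hW, sw_Pop p (fun z T => occ L T z y)]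
  simp_rw [occ_mean hd hmean hW]
  rw [← Popn_GG]; rfl

lemma bb_second (hd : 0 < d) (hW : ∑' T : ET (Stp d), treeW p T = 1) (L : ℕ) (x y y' : Zd d) :
    ∑' T, bw p T * (bb L T x y * bb L T x y') = qq p * Pop (fun z => MM p L z y y') x := by
  unfold bb
  simp_rw [fst1_mul]
  rw [fst1_sum hd hW, sw_Pop p (fun z T => occ L T z y * occ L T z y')]
  rfl

lemma MM_le (hd : 0 < d) (hmean : ∑' k : ℕ, (k : ℝ≥0∞) * p k = 1)
    (hW : ∑' T : ET (Stp d), treeW p T = 1) (K h : ℕ) (hh : h ≤ K) (x y y' : Zd d) :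
    MM p h x y y' ≤ (1 + ∑' k : ℕ, (k:ℝ≥0∞)^2 * p k) *
      ∑ i ∈ Finset.range h, (Pop^[i] (fun z => GG K z y * GG K z y')) x := by
  induction h generalizing x with
  | zero => simp [MM, occ]
  | succ h ih =>
    refine (occ_second hd hmean hW h x y y').trans ?_
    rw [Finset.sum_range_succ', mul_add]
    refine add_le_add ?_ ?_
    · refine (Pop_mono (fun z => ih (by omega) z) x).trans (le_of_eq ?_)
      have := Popn_const 1 (1 + ∑' k : ℕ, (k:ℝ≥0∞)^2 * p k)
        (fun z => ∑ i ∈ Finset.range h, (Pop^[i] (fun z => GG K z y * GG K z y')) z) x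
      simp only [Function.iterate_one] at this
      rw [this, Pop_sum]
      simp only [Function.iterate_succ_apply']
    · gcongr
      exact mul_le_mul' (GG_mono hh _ _) (GG_mono hh _ _)

lemma Eh_bb (hd : 0 < d) (hmean : ∑' k : ℕ, (k : ℝ≥0∞) * p k = 1)
    (hW : ∑' T : ET (Stp d), treeW p T = 1) (L r n : ℕ) (x y : Zd d) :
    Eh p (fun T x => bb L T x y) r (n + r) x
      = qq p * ∑ i ∈ Finset.range n, ∑ j ∈ Finset.range L, pk (i + 1 + r + (1 + j)) x y := by
  rw [Eh_eq _ hd (bw_sum hd hmean hW), Finset.mul_sum]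
  refine Finset.sum_congr rfl fun i _ => ?_
  simp_rw [bb_mean hd hmean hW]
  rw [Popn_const, Popn_sum]
  simp_rw [Popn_pk]

lemma Qh_bb (hd : 0 < d) (hmean : ∑' k : ℕ, (k : ℝ≥0∞) * p k = 1)
    (hW : ∑' T : ET (Stp d), treeW p T = 1) (L : ℕ) (y y' : Zd d) :
    Qh p (fun T x => bb L T x y) (fun T x => bb L T x y') L (L + L) 0
      ≤ (qq p * (1 + ∑' k : ℕ, (k:ℝ≥0∞)^2 * p k) + 2 * qq p ^ 2) * L *
        ∑' z, (∑ k ∈ Finset.range (2*L+2), pk (L+k) 0 z) * (GG (2*L+2) z y * GG (2*L+2) z y') := by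
  have hB := bw_sum hd hmean hW
  set K := 2*L+2 with hK
  set m := 1 + ∑' k : ℕ, (k:ℝ≥0∞)^2 * p k with hm
  set G : Zd d → ℝ≥0∞ := fun z => GG K z y * GG K z y' with hG
  set U : Zd d → ℝ≥0∞ := fun x => ∑ k ∈ Finset.range K, (Pop^[k] G) x with hU
  have hbeta : ∀ z u : Zd d, ∑' T, bw p T * bb L T z u ≤ qq p * GG K z u := by
    intro z u
    rw [bb_mean hd hmean hW, GG_eq]
    gcongr
    simp_rw [add_comm 1]
    exact sum_shift_le (fun k => pk k z u) L 1 K (by omega)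
  have hE : ∀ n ≤ L, ∀ z u : Zd d, Eh p (fun T x => bb L T x u) 0 n z ≤ qq p * L * GG K z u := by
    intro n hn z u
    have := Eh_bb hd hmean hW L 0 n z u
    rw [add_zero] at this
    rw [this, mul_assoc]
    gcongr
    rw [Finset.sum_comm]
    have h1 : ∀ j ∈ Finset.range L, ∑ i ∈ Finset.range n, pk (i + 1 + 0 + (1 + j)) z u ≤ GG K z u := by
      intro j hj
      rw [GG_eq]
      have := sum_shift_le (fun k => pk k z u) n (2 + j) K (by simp at hj; omega)
      refine le_trans (le_of_eq ?_) this
      refine Finset.sum_congr rfl fun i _ => ?_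
      congr 1; omega
    refine (Finset.sum_le_sum h1).trans ?_
    simp
  set g : Zd d → ℝ≥0∞ := fun z => qq p * m * (∑ i ∈ Finset.range L, (Pop^[i+1] G) z) + 2 * qq p^2 * L * G z with hg
  have hrec : ∀ x, Qh p (fun T x => bb L T x y) (fun T x => bb L T x y') 0 L x
      ≤ ∑ i ∈ Finset.range L, (Pop^[i+1] g) x := by
    refine fun x => rec_le (fun n => Qh p (fun T x => bb L T x y) (fun T x => bb L T x y') 0 n) g L ?_ ?_ L le_rfl x
    · intro x; simp [Qh, hocc]
    · intro n hn x
      rw [Qh_step _ _ hd hB]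
      refine Pop_mono (fun z => add_le_add_left ?_ _) x
      rw [bb_second hd hW]
      have h1 : Pop (fun z => MM p L z y y') z ≤ m * (∑ i ∈ Finset.range L, (Pop^[i+1] G) z) := by
        refine (Pop_mono (fun z => MM_le hd hmean hW K L (by omega) z y y') z).trans (le_of_eq ?_)
        have := Popn_const 1 m (fun z => ∑ i ∈ Finset.range L, (Pop^[i] G) z) z
        simp only [Function.iterate_one] at this
        rw [this, Pop_sum]
        simp only [Function.iterate_succ_apply']
      calc _ ≤ qq p * (m * (∑ i ∈ Finset.range L, (Pop^[i+1] G) z)) + (qq p * GG K z y) * (qq p * L * GG K z y')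
            + (qq p * GG K z y') * (qq p * L * GG K z y) := by
            gcongr
            · exact hbeta _ _
            · exact hE _ hn.le _ _
            · exact hbeta _ _
            · exact hE _ hn.le _ _
        _ = g z := by simp only [hg, hG]; ring
  have hrec2 : ∀ x, Qh p (fun T x => bb L T x y) (fun T x => bb L T x y') 0 L x
      ≤ (qq p * m + 2 * qq p ^2) * L * U x := by
    intro x
    refine (hrec x).trans ?_
    have h1 : ∀ i, (Pop^[i+1] g) x = qq p * m * (∑ j ∈ Finset.range L, (Pop^[i+1+(j+1)] G) x)
        + 2 * qq p^2 * L * (Pop^[i+1] G) x := by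
      intro i
      have := Popn_sum (i+1) (Finset.univ : Finset Bool) (fun b z => if b then qq p * m * (∑ i ∈ Finset.range L, (Pop^[i+1] G) z)
        else 2 * qq p^2 * L * G z) x
      simp only [Fintype.sum_bool, if_true, Bool.false_eq_true, if_false] at this
      rw [hg, this, Popn_const, Popn_const, Popn_sum]
      simp_rw [Function.iterate_add_apply]
    simp_rw [h1]
    rw [Finset.sum_add_distrib, ← Finset.mul_sum, ← Finset.mul_sum, Finset.sum_comm]
    have h2 : ∀ j ∈ Finset.range L, ∑ i ∈ Finset.range L, (Pop^[i+1+(j+1)] G) x ≤ U x := by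
      intro j hj
      have := sum_shift_le (fun k => (Pop^[k] G) x) L (1 + (j+1)) K (by simp at hj; omega)
      simpa only [← add_assoc] using this
    have h3 : ∑ i ∈ Finset.range L, (Pop^[i+1] G) x ≤ U x :=
      sum_shift_le (fun k => (Pop^[k] G) x) L 1 K (by omega)
    calc _ ≤ qq p * m * (∑ j ∈ Finset.range L, U x) + 2 * qq p^2 * L * U x := by
          gcongr with j hj
          exact h2 j hj
      _ = _ := by simp; ring
  rw [Qh_eq _ _ hB]
  refine (Popn_mono L hrec2 0).trans (le_of_eq ?_)
  rw [Popn_const, hU, Popn_sum]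
  congr 1
  simp_rw [Finset.sum_mul]
  rw [Summable.tsum_finsetSum fun _ _ => ENNReal.summable]
  refine Finset.sum_congr rfl fun k _ => ?_
  rw [← Function.iterate_add_apply, Popn_eq]

lemma quad_le (hd : 0 < d) (L K : ℕ) :
    ∑' y : Zd d, ∑' y' : Zd d, (∑' z, (∑ k ∈ Finset.range K, pk (L+k) 0 z) * (GG K z y * GG K z y'))^2
      ≤ (K * (ENNReal.ofReal ((d:ℝ)^((d:ℝ)/2)) * hk ((d:ℝ)/2) L)) * K *
        (ENNReal.ofReal ((d:ℝ)^((d:ℝ)/2)) * (∑ j ∈ Finset.range K, hk ((d:ℝ)/8) j)^4) := by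
  set u : Zd d → ℝ≥0∞ := fun z => ∑ k ∈ Finset.range K, pk (L+k) 0 z with hu
  set H : Zd d → Zd d → ℝ≥0∞ := fun z z' => ∑' y, GG K z y * GG K z' y with hH
  set cd := ENNReal.ofReal ((d:ℝ)^((d:ℝ)/2))
  set S := ∑ j ∈ Finset.range K, hk ((d:ℝ)/8) j with hS
  have e1 : ∑' y : Zd d, ∑' y' : Zd d, (∑' z, u z * (GG K z y * GG K z y'))^2
      = ∑' z, ∑' z', u z * u z' * (H z z' * H z z') := by
    have a : ∀ y y' : Zd d, (∑' z, u z * (GG K z y * GG K z y'))^2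
       = ∑' z, ∑' z', u z * u z' * ((GG K z y * GG K z' y) * (GG K z y' * GG K z' y')) := by
      intro y y'
      rw [sq, ← ENNReal.tsum_mul_right]
      refine tsum_congr fun z => ?_
      rw [← ENNReal.tsum_mul_left]
      refine tsum_congr fun z' => ?_
      ring
    have b : ∀ z z', u z * u z' * (H z z' * H z z')
       = ∑' y, ∑' y', u z * u z' * ((GG K z y * GG K z' y) * (GG K z y' * GG K z' y')) := by
      intro z z'
      simp_rw [ENNReal.tsum_mul_left, ENNReal.tsum_mul_right]
      rfl
    simp_rw [a, b]
    calc _ = ∑' y : Zd d, ∑' z : Zd d, ∑' y' : Zd d, ∑' z' : Zd d, u z * u z' * ((GG K z y * GG K z' y) * (GG K z y' * GG K z' y')) :=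
          tsum_congr fun y => ENNReal.tsum_comm
      _ = ∑' z : Zd d, ∑' y : Zd d, ∑' y' : Zd d, ∑' z' : Zd d, u z * u z' * ((GG K z y * GG K z' y) * (GG K z y' * GG K z' y')) :=
          ENNReal.tsum_comm
      _ = ∑' z : Zd d, ∑' y : Zd d, ∑' z' : Zd d, ∑' y' : Zd d, u z * u z' * ((GG K z y * GG K z' y) * (GG K z y' * GG K z' y')) :=
          tsum_congr fun z => tsum_congr fun y => ENNReal.tsum_comm
      _ = _ := tsum_congr fun z => ENNReal.tsum_comm
  have e2 : ∀ z z', H z z' = ∑ a ∈ Finset.range K ×ˢ Finset.range K, pk (a.1 + a.2) z z' := by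
    intro z z'
    simp only [hH, GG_eq]
    rw [tsum_inner_sum, Finset.sum_product]
  have e3 : ∀ z, ∑' z', H z z' * H z z' ≤ cd * S^4 := by
    intro z
    simp_rw [e2]
    rw [tsum_inner_sum]
    have e2 : ∀ a b : ℕ × ℕ, pk (a.1 + a.2 + (b.1 + b.2)) z z
        ≤ cd * (hk ((d:ℝ)/8) a.1 * hk ((d:ℝ)/8) a.2 * hk ((d:ℝ)/8) b.1 * hk ((d:ℝ)/8) b.2) := by
      intro a b
      refine (pk_le hd _ _ _).trans ?_
      gcongr
      rw [show (d:ℝ)/2 = 4 * ((d:ℝ)/8) by ring]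
      exact hk_le_mul4 _ (by positivity) _ _ _ _ _ (by omega) (by omega) (by omega) (by omega)
    refine (Finset.sum_le_sum fun a _ => Finset.sum_le_sum fun b _ => e2 a b).trans (le_of_eq ?_)
    simp_rw [← Finset.mul_sum]
    rw [Finset.sum_product]
    simp_rw [Finset.sum_product]
    rw [sum4]
    ring
  have e4 : ∀ z, u z ≤ K * (cd * hk ((d:ℝ)/2) L) := by
    intro z
    have : ∀ k ∈ Finset.range K, pk (L+k) 0 z ≤ cd * hk ((d:ℝ)/2) L := by
      intro k _
      refine (pk_le hd _ _ _).trans ?_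
      gcongr
      unfold hk
      refine ENNReal.ofReal_le_ofReal ?_
      refine Real.rpow_le_rpow_of_nonpos (by positivity) ?_ (by linarith [show 0 ≤ (d:ℝ)/2 by positivity])
      push_cast; linarith [Nat.cast_nonneg (α := ℝ) k]
    refine (Finset.sum_le_sum this).trans ?_
    simp
  have e5 : ∑' z, u z = K := by
    simp only [hu]
    rw [Summable.tsum_finsetSum fun _ _ => ENNReal.summable]
    simp_rw [pk_sum hd]
    simp
  rw [e1]
  calc _ ≤ ∑' z, ∑' z', (K * (cd * hk ((d:ℝ)/2) L)) * u z * (H z z' * H z z') := by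
        refine ENNReal.tsum_le_tsum fun z => ENNReal.tsum_le_tsum fun z' => ?_
        rw [mul_comm (u z)]
        gcongr
        exact e4 z'
    _ ≤ ∑' z, (K * (cd * hk ((d:ℝ)/2) L)) * u z * (cd * S^4) := by
        refine ENNReal.tsum_le_tsum fun z => ?_
        rw [ENNReal.tsum_mul_left]
        gcongr
        exact e3 z
    _ = _ := by
        rw [ENNReal.tsum_mul_right, ENNReal.tsum_mul_left, e5]
end

/-! #### Part II : conclusion of the moment estimates -/

section
variable {d : ℕ} {p : PMF ℕ}

lemma qq_le (hmean : ∑' k : ℕ, (k : ℝ≥0∞) * p k = 1) : qq p ≤ 1 := by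
  rw [← sb_sum hmean, tsum_eq_zero_add' ENNReal.summable]
  exact le_add_self

lemma EX2_le (hd : 0 < d) (hd8 : d < 8) (hmean : ∑' k : ℕ, (k : ℝ≥0∞) * p k = 1)
    (hm2 : ∑' k : ℕ, (k : ℝ≥0∞)^2 * p k ≠ ⊤)
    (hW : ∑' T : ET (Stp d), treeW p T = 1) : ∃ C : ℝ, 0 < C ∧ ∀ L : ℕ, 1 ≤ L →
    ∑' v : Fin (L+L) → HA d, ∑' v' : Fin (L+L) → HA d, wt (hwt p) v * wt (hwt p) v' * (XX (bb L) L L v v' * XX (bb L) L L v v')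
      ≤ ENNReal.ofReal (C * (L:ℝ)^(8 - (d:ℝ))) := by
  set m := 1 + ∑' k : ℕ, (k : ℝ≥0∞)^2 * p k with hm
  have hmt : m ≠ ⊤ := by simp [hm, hm2]
  have hq := qq_le hmean
  set A := qq p * m + 2 * qq p ^ 2 with hA
  have hAt : A ≠ ⊤ := by
    have hqt : qq p ≠ ⊤ := ne_top_of_le_ne_top ENNReal.one_ne_top hq
    rw [hA]
    exact ENNReal.add_ne_top.2 ⟨ENNReal.mul_ne_top hqt hmt, ENNReal.mul_ne_top (by norm_num) (ENNReal.pow_ne_top hqt)⟩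
  set cd : ℝ := (d:ℝ)^((d:ℝ)/2) with hcd
  have hcd0 : 0 ≤ cd := by positivity
  set s : ℝ := (d:ℝ)/8 with hs
  have hdR : (d:ℝ) < 8 := by exact_mod_cast hd8
  have hd0 : (0:ℝ) < d := by exact_mod_cast hd
  have hs1 : s < 1 := by rw [hs]; linarith
  have hs0 : 0 < s := by rw [hs]; linarith
  have h1s : 0 < (1-s)⁻¹ := by rw [inv_pos]; linarith
  refine ⟨A.toReal^2 * (16 * cd) * (cd * ((1-s)⁻¹ * 4^(1-s))^4) + 1, by positivity, fun L hL => ?_⟩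
  have hLR : (1:ℝ) ≤ L := by exact_mod_cast hL
  have hLp : (0:ℝ) < L := by linarith
  rw [EX2_eq]
  have h1 : ∀ y y' : Zd d, Qh p (fun T x => bb L T x y) (fun T x => bb L T x y') L (L+L) 0
          * Qh p (fun T x => bb L T x y) (fun T x => bb L T x y') L (L+L) 0
      ≤ (A * L)^2 * (∑' z, (∑ k ∈ Finset.range (2*L+2), pk (L+k) 0 z) * (GG (2*L+2) z y * GG (2*L+2) z y'))^2 := by
    intro y y'
    rw [← mul_pow, ← sq]
    gcongr
    exact Qh_bb hd hmean hW L y y'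
  refine (ENNReal.tsum_le_tsum fun y => ENNReal.tsum_le_tsum fun y' => h1 y y').trans ?_
  simp_rw [ENNReal.tsum_mul_left]
  refine (mul_le_mul_right (quad_le hd L (2*L+2)) _).trans ?_
  have hK : ((2*L+2 : ℕ):ℝ) ≤ 4 * L := by push_cast; linarith
  have hKE : ((2*L+2 : ℕ):ℝ≥0∞) ≤ ENNReal.ofReal (4 * L) := by
    rw [← ENNReal.ofReal_natCast]
    exact ENNReal.ofReal_le_ofReal hK
  have hS : ∑ j ∈ Finset.range (2*L+2), hk s j ≤ ENNReal.ofReal ((1-s)⁻¹ * (4*L)^(1-s)) := by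
    refine (hk_sum_lt s hs0 hs1 _).trans (ENNReal.ofReal_le_ofReal ?_)
    gcongr
  have hhk : hk ((d:ℝ)/2) L ≤ ENNReal.ofReal ((L:ℝ)^(-((d:ℝ)/2))) := by
    unfold hk
    refine ENNReal.ofReal_le_ofReal ?_
    exact Real.rpow_le_rpow_of_nonpos hLp (by linarith) (by linarith)
  have hA' : A * L = ENNReal.ofReal (A.toReal * L) := by
    rw [ENNReal.ofReal_mul ENNReal.toReal_nonneg, ENNReal.ofReal_toReal hAt, ENNReal.ofReal_natCast]
  rw [hA']
  calc _ ≤ ENNReal.ofReal (A.toReal * L)^2 * (ENNReal.ofReal (4*L) * (ENNReal.ofReal cd * ENNReal.ofReal ((L:ℝ)^(-((d:ℝ)/2))))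
          * ENNReal.ofReal (4*L) * (ENNReal.ofReal cd * (ENNReal.ofReal ((1-s)⁻¹ * (4*L)^(1-s)))^4)) := by
        gcongr
    _ = ENNReal.ofReal ((A.toReal * L)^2 * ((4*L) * (cd * (L:ℝ)^(-((d:ℝ)/2))) * (4*L) * (cd * ((1-s)⁻¹ * (4*L)^(1-s))^4))) := by
        rw [← ENNReal.ofReal_mul (by positivity), ← ENNReal.ofReal_mul (by positivity), ← ENNReal.ofReal_mul (by positivity),
         ← ENNReal.ofReal_pow (by positivity), ← ENNReal.ofReal_pow (by positivity), ← ENNReal.ofReal_mul (by positivity),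
         ← ENNReal.ofReal_mul (by positivity), ← ENNReal.ofReal_mul (by positivity)]
    _ ≤ _ := by
        refine ENNReal.ofReal_le_ofReal ?_
        have e : (L:ℝ)^(8 - (d:ℝ)) = L^2 * L * L^(-((d:ℝ)/2)) * L * (L^(1-s))^4 := by
          rw [← Real.rpow_mul_natCast hLp.le, ← Real.rpow_natCast]
          nth_rewrite 3 [← Real.rpow_one (L:ℝ)]
          nth_rewrite 5 [← Real.rpow_one (L:ℝ)]
          rw [← Real.rpow_add hLp, ← Real.rpow_add hLp, ← Real.rpow_add hLp, ← Real.rpow_add hLp]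
          congr 1; rw [hs]; push_cast; ring
        rw [Real.mul_rpow (by norm_num) hLp.le, add_mul, e]
        have : 0 ≤ 1 * ((L:ℝ)^2 * L * L^(-((d:ℝ)/2)) * L * (L^(1-s))^4) := by positivity
        refine le_trans (le_of_eq ?_) (le_add_of_nonneg_right this)
        ring

lemma EX_ge (hd : 0 < d) (hmean : ∑' k : ℕ, (k : ℝ≥0∞) * p k = 1)
    (hW : ∑' T : ET (Stp d), treeW p T = 1) : ∀ L : ℕ, 1 ≤ L →
    (qq p)^2 * ENNReal.ofReal ((4 * 8^d)⁻¹ * (L:ℝ)^(4 - (d:ℝ)/2)) ≤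
    ∑' v : Fin (L+L) → HA d, ∑' v' : Fin (L+L) → HA d, wt (hwt p) v * wt (hwt p) v' * XX (bb L) L L v v' := by
  intro L hL
  have hLR : (1:ℝ) ≤ L := by exact_mod_cast hL
  have hLp : (0:ℝ) < L := by linarith
  rw [EX_eq]
  simp_rw [Eh_bb hd hmean hW]
  set S : Zd d → ℝ≥0∞ := fun y => ∑ i ∈ Finset.range L, ∑ j ∈ Finset.range L, pk (i + 1 + L + (1 + j)) 0 y with hS
  have e0 : ∀ y, (qq p * S y) * (qq p * S y) = (qq p)^2 * (S y * S y) := by intro y; ring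
  change _ ≤ ∑' y, (qq p * S y) * (qq p * S y)
  simp_rw [e0]
  rw [ENNReal.tsum_mul_left]
  gcongr
  -- mass and second moment
  have hmass : ∑' y, S y = (L:ℝ≥0∞)^2 := by
    simp only [hS]
    rw [Summable.tsum_finsetSum fun _ _ => ENNReal.summable]
    have : ∀ i ∈ Finset.range L, ∑' y : Zd d, ∑ j ∈ Finset.range L, pk (i + 1 + L + (1 + j)) 0 y = L := by
      intro i _
      rw [Summable.tsum_finsetSum fun _ _ => ENNReal.summable]
      simp_rw [pk_sum hd]; simp
    rw [Finset.sum_congr rfl this]; simp [sq]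
  have hsec : ∑' y, S y * (nsq y : ℝ≥0∞) ≤ (L:ℝ≥0∞)^2 * (3 * L) := by
    simp only [hS, Finset.sum_mul]
    rw [Summable.tsum_finsetSum fun _ _ => ENNReal.summable]
    have : ∀ i ∈ Finset.range L, ∑' y : Zd d, ∑ j ∈ Finset.range L, pk (i + 1 + L + (1 + j)) 0 y * (nsq y : ℝ≥0∞) ≤ L * (3*L) := by
      intro i hi
      rw [Summable.tsum_finsetSum fun _ _ => ENNReal.summable]
      simp_rw [pk_nsq hd]
      have : ∀ j ∈ Finset.range L, ((i + 1 + L + (1 + j) : ℕ) : ℝ≥0∞) ≤ 3 * L := by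
        intro j hj
        simp at hi hj
        have : i + 1 + L + (1 + j) ≤ 3 * L := by omega
        exact_mod_cast this
      refine (Finset.sum_le_sum this).trans ?_
      simp
    refine (Finset.sum_le_sum this).trans (le_of_eq ?_)
    simp [sq]; ring
  set m : ℕ := Nat.sqrt (6 * L) + 1 with hm
  have hm1 : 6 * L ≤ m * m := (Nat.lt_succ_sqrt (6*L)).le
  set Bx : Finset (Zd d) := Fintype.piFinset fun _ : Fin d => Finset.Icc (-(m:ℤ)) m with hBx
  have hout : ∀ y : Zd d, y ∉ Bx → 6 * L ≤ nsq y := by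
    intro y hy
    simp only [hBx, Fintype.mem_piFinset, Finset.mem_Icc, not_forall] at hy
    obtain ⟨i, hi⟩ := hy
    have h1 : m ≤ (y i).natAbs := by omega
    have h2 : (y i).natAbs ^ 2 ≤ nsq y := Finset.single_le_sum (f := fun i => (y i).natAbs^2) (fun _ _ => Nat.zero_le _) (Finset.mem_univ i)
    nlinarith
  have hsplit : ∀ y, 2 * S y ≤ 2 * (if y ∈ Bx then S y else 0) + (3 * (L:ℝ≥0∞))⁻¹ * (S y * (nsq y : ℝ≥0∞)) := by
    intro y
    by_cases hy : y ∈ Bx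
    · simp [hy]
    · simp only [hy, if_false, mul_zero, zero_add]
      have h1 : (2:ℝ≥0∞) * (3 * L) ≤ (nsq y : ℝ≥0∞) := by
        have : 2 * (3 * L) ≤ nsq y := by have := hout y hy; omega
        exact_mod_cast this
      have h3 : (3 * (L:ℝ≥0∞))⁻¹ * (3 * L) = 1 := by
        refine ENNReal.inv_mul_cancel ?_ ?_
        · have : L ≠ 0 := by omega
          simp [this]
        · exact ENNReal.mul_ne_top (by norm_num) (by simp)
      calc 2 * S y = (3 * (L:ℝ≥0∞))⁻¹ * (3 * L) * (2 * S y) := by rw [h3, one_mul]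
        _ = (3 * (L:ℝ≥0∞))⁻¹ * (S y * (2 * (3 * L))) := by ring
        _ ≤ _ := by gcongr
  have hhalf : (L:ℝ≥0∞)^2 ≤ 2 * ∑ y ∈ Bx, S y := by
    have h1 := ENNReal.tsum_le_tsum hsplit
    rw [ENNReal.tsum_mul_left, ENNReal.tsum_add, ENNReal.tsum_mul_left, ENNReal.tsum_mul_left, hmass] at h1
    have h2 : ∑' y, (if y ∈ Bx then S y else 0) = ∑ y ∈ Bx, S y := by
      rw [tsum_eq_sum (s := Bx) (by intro b hb; simp [hb])]
      exact Finset.sum_congr rfl fun y hy => by simp [hy]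
    rw [h2] at h1
    have h3 : (3 * (L:ℝ≥0∞))⁻¹ * (∑' y, S y * (nsq y : ℝ≥0∞)) ≤ (L:ℝ≥0∞)^2 := by
      have h3 : (3 * (L:ℝ≥0∞))⁻¹ * (3 * L) = 1 := by
        refine ENNReal.inv_mul_cancel ?_ ?_
        · have : L ≠ 0 := by omega
          simp [this]
        · exact ENNReal.mul_ne_top (by norm_num) (by simp)
      calc _ ≤ (3 * (L:ℝ≥0∞))⁻¹ * ((L:ℝ≥0∞)^2 * (3 * L)) := by gcongr
        _ = (3 * (L:ℝ≥0∞))⁻¹ * (3 * L) * (L:ℝ≥0∞)^2 := by ring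
        _ = _ := by rw [h3, one_mul]
    have h4 : (L:ℝ≥0∞)^2 + (L:ℝ≥0∞)^2 ≤ 2 * (∑ y ∈ Bx, S y) + (L:ℝ≥0∞)^2 := by
      rw [← two_mul]; exact h1.trans (by gcongr)
    exact (ENNReal.add_le_add_iff_right (ENNReal.pow_ne_top (by simp))).1 h4
  have hcard : (Bx.card : ℝ) ≤ 8^d * (L:ℝ)^((d:ℝ)/2) := by
    have h1 : Bx.card = (2*m+1)^d := by
      rw [hBx, Fintype.card_piFinset]
      simp only [Int.card_Icc, Finset.prod_const, Finset.card_univ, Fintype.card_fin]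
      congr 1; omega
    have h2 : ((2*m+1 : ℕ):ℝ) ≤ 8 * Real.sqrt L := by
      have a1 : ((Nat.sqrt (6*L) : ℕ):ℝ) ≤ Real.sqrt (6*L) := by
        have := Real.nat_sqrt_le_real_sqrt (a := 6*L)
        push_cast at this; exact this
      have a2 : (1:ℝ) ≤ Real.sqrt L := by rw [Real.one_le_sqrt]; exact hLR
      have a3 : Real.sqrt (6*L) ≤ 2.5 * Real.sqrt L := by
        rw [Real.sqrt_mul (by norm_num)]
        gcongr
        rw [Real.sqrt_le_left (by norm_num)]; norm_num
      rw [hm]; push_cast; linarith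
    rw [h1]
    push_cast at h2 ⊢
    calc (2*(m:ℝ)+1)^d ≤ (8 * Real.sqrt L)^d := by gcongr
      _ = _ := by
        rw [mul_pow, Real.sqrt_eq_rpow, ← Real.rpow_natCast ((L:ℝ)^(1/2:ℝ)), ← Real.rpow_mul hLp.le]
        congr 2; ring
  have hcs : (∑ y ∈ Bx, S y)^2 ≤ Bx.card * ∑' y, S y * S y := by
    have := wcs (fun y : Zd d => if y ∈ Bx then 1 else 0) (fun _ => 1) S
    simp only [ite_mul, one_mul, zero_mul] at this
    have t : ∀ F : Zd d → ℝ≥0∞, ∑' y, (if y ∈ Bx then F y else 0) = ∑ y ∈ Bx, F y := by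
      intro F
      rw [tsum_eq_sum (s := Bx) (by intro b hb; simp [hb])]
      exact Finset.sum_congr rfl fun y hy => by simp [hy]
    rw [t, t, t] at this
    refine this.trans ?_
    simp only [Finset.sum_const, nsmul_eq_mul, mul_one]
    gcongr
    exact ENNReal.sum_le_tsum _
  have hfin : ((L:ℝ≥0∞)^2)^2 ≤ ENNReal.ofReal (4 * (8^d * (L:ℝ)^((d:ℝ)/2))) * ∑' y, S y * S y := by
    calc ((L:ℝ≥0∞)^2)^2 ≤ (2 * ∑ y ∈ Bx, S y)^2 := by gcongr
      _ = 4 * (∑ y ∈ Bx, S y)^2 := by ring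
      _ ≤ 4 * (Bx.card * ∑' y, S y * S y) := by gcongr
      _ = (4 * Bx.card) * ∑' y, S y * S y := by ring
      _ ≤ _ := by
        gcongr
        rw [ENNReal.ofReal_mul (by norm_num)]
        gcongr
        · simp
        · rw [← ENNReal.ofReal_natCast]; exact ENNReal.ofReal_le_ofReal hcard
  have hL2 : ((L:ℝ≥0∞)^2)^2 = ENNReal.ofReal ((L:ℝ)^4) := by
    rw [ENNReal.ofReal_pow hLp.le, ENNReal.ofReal_natCast]; ring
  rw [hL2] at hfin
  have hpos : (0:ℝ) < 4 * (8^d * (L:ℝ)^((d:ℝ)/2)) := by positivity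
  have : ENNReal.ofReal ((4 * 8^d)⁻¹ * (L:ℝ)^(4 - (d:ℝ)/2)) = ENNReal.ofReal ((L:ℝ)^4) / ENNReal.ofReal (4 * (8^d * (L:ℝ)^((d:ℝ)/2))) := by
    rw [← ENNReal.ofReal_div_of_pos hpos]
    congr 1
    rw [Real.rpow_sub hLp]
    have : (L:ℝ)^(4:ℝ) = (L:ℝ)^4 := by exact_mod_cast Real.rpow_natCast (L:ℝ) 4
    rw [this]
    field_simp
  rw [this]
  exact ENNReal.div_le_of_le_mul' hfin

/-- Paley-Zygmund -/
lemma partII (hd : 0 < d) (hd8 : d < 8) (hmean : ∑' k : ℕ, (k : ℝ≥0∞) * p k = 1)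
    (hm2 : ∑' k : ℕ, (k : ℝ≥0∞)^2 * p k ≠ ⊤) (hq0 : qq p ≠ 0)
    (hW : ∑' T : ET (Stp d), treeW p T = 1) : ∃ c : ℝ≥0∞, 0 < c ∧ ∀ L : ℕ, 1 ≤ L →
    c ≤ ∑' v : Fin (L+L) → HA d, ∑' v' : Fin (L+L) → HA d, wt (hwt p) v * wt (hwt p) v' *
      (if XX (bb L) L L v v' = 0 then 0 else 1) := by
  obtain ⟨C, hC, h2⟩ := EX2_le hd hd8 hmean hm2 hW
  have h1 := EX_ge hd hmean hW
  have hq := qq_le hmean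
  have hqt : qq p ≠ ⊤ := ne_top_of_le_ne_top ENNReal.one_ne_top hq
  refine ⟨ENNReal.ofReal (((qq p).toReal^2 * (4 * 8^d)⁻¹)^2 / C), ?_, fun L hL => ?_⟩
  · rw [ENNReal.ofReal_pos]
    have := ENNReal.toReal_pos hq0 hqt
    positivity
  have h1 := h1 L hL
  have h2 := h2 L hL
  have hLR : (1:ℝ) ≤ L := by exact_mod_cast hL
  have hLp : (0:ℝ) < L := by linarith
  rw [← ENNReal.tsum_prod] at h1 h2 ⊢
  have hcs := wcs (fun a : (Fin (L+L) → HA d) × (Fin (L+L) → HA d) => wt (hwt p) a.1 * wt (hwt p) a.2)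
    (fun a => XX (bb L) L L a.1 a.2) (fun a => if XX (bb L) L L a.1 a.2 = 0 then 0 else 1)
  have e1 : ∀ a : (Fin (L+L) → HA d) × (Fin (L+L) → HA d), XX (bb L) L L a.1 a.2 * (if XX (bb L) L L a.1 a.2 = 0 then 0 else 1)
     = XX (bb L) L L a.1 a.2 := by
    intro a; split_ifs with h <;> simp [h]
  have e2 : ∀ a : (Fin (L+L) → HA d) × (Fin (L+L) → HA d), (if XX (bb L) L L a.1 a.2 = 0 then (0:ℝ≥0∞) else 1) * (if XX (bb L) L L a.1 a.2 = 0 then 0 else 1)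
     = (if XX (bb L) L L a.1 a.2 = 0 then 0 else 1) := by
    intro a; split_ifs with h <;> simp
  simp_rw [e1, e2] at hcs
  set w := ∑' a : (Fin (L+L) → HA d) × (Fin (L+L) → HA d), wt (hwt p) a.1 * wt (hwt p) a.2 * (if XX (bb L) L L a.1 a.2 = 0 then 0 else 1)
  have h3 := ((pow_le_pow_left' h1 2).trans hcs).trans (mul_le_mul_left h2 _)
  have e3 : (qq p)^2 = ENNReal.ofReal ((qq p).toReal^2) := by
    rw [ENNReal.ofReal_pow ENNReal.toReal_nonneg, ENNReal.ofReal_toReal hqt]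
  rw [e3, ← ENNReal.ofReal_mul (by positivity), ← ENNReal.ofReal_pow (by positivity)] at h3
  have hpos : 0 < C * (L:ℝ)^(8 - (d:ℝ)) := by positivity
  have h4 := ENNReal.div_le_of_le_mul' h3
  rw [← ENNReal.ofReal_div_of_pos hpos] at h4
  refine le_trans (le_of_eq ?_) h4
  congr 1
  have e5 : (L:ℝ)^(8 - (d:ℝ)) = ((L:ℝ)^(4 - (d:ℝ)/2))^2 := by
    rw [← Real.rpow_mul_natCast hLp.le]; congr 1; push_cast; ring
  rw [e5]
  have : (L:ℝ)^(4 - (d:ℝ)/2) ≠ 0 := by positivity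
  field_simp
end

/-! #### Coding plane trees with embeddings by `ET` -/

section
variable {d : ℕ}

def words {S : Type} : ET S → Set (List ℕ)
  | ET.node k _ c => {w | w = [] ∨ ∃ i : Fin k, ∃ u ∈ words (c i), w = i.val :: u}

def pos : ET (Stp d) → Zd d → List ℕ → Zd d
  | ET.node k s c => fun x w => match w with
    | [] => x
    | i :: u => if h : i < k then pos (c ⟨i, h⟩) (x + vec (s ⟨i, h⟩)) u else 0

lemma words_nil {S : Type} (T : ET S) : [] ∈ words T := by
  cases T; simp [words]

lemma words_cons {S : Type} {k : ℕ} {s : Fin k → S} {c : Fin k → ET S} {i : ℕ} {u : List ℕ} :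
    i :: u ∈ words (ET.node k s c) ↔ ∃ h : i < k, u ∈ words (c ⟨i, h⟩) := by
  simp only [words, mem_setOf_eq, reduceCtorEq, List.cons.injEq, false_or]
  constructor
  · rintro ⟨j, u', hu, rfl, rfl⟩; exact ⟨j.2, hu⟩
  · rintro ⟨h, hu⟩; exact ⟨⟨i, h⟩, u, hu, rfl, rfl⟩

lemma pos_nil (T : ET (Stp d)) (x : Zd d) : pos T x [] = x := by
  cases T; simp [pos]

lemma pos_cons {k : ℕ} {s : Fin k → Stp d} {c : Fin k → ET (Stp d)} (x : Zd d) (i : ℕ) (h : i < k) (u : List ℕ) :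
    pos (ET.node k s c) x (i :: u) = pos (c ⟨i, h⟩) (x + vec (s ⟨i, h⟩)) u := by
  simp [pos, h]

lemma words_diff {S : Type} (k : ℕ) (s : Fin k → S) (c : Fin k → ET S) :
    words (ET.node k s c) \ {[]} = ⋃ i : Fin k, (fun u => i.val :: u) '' words (c i) := by
  ext w
  simp only [words, mem_diff, mem_setOf_eq, mem_singleton_iff, mem_iUnion, mem_image]
  constructor
  · rintro ⟨h | ⟨i, u, hu, rfl⟩, h2⟩
    · exact absurd h h2
    · exact ⟨i, u, hu, rfl⟩
  · rintro ⟨i, u, hu, rfl⟩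
    exact ⟨Or.inr ⟨i, u, hu, rfl⟩, by simp⟩

lemma words_finite {S : Type} (T : ET S) : (words T).Finite := by
  induction T with
  | node k s c ih =>
    have : (words (ET.node k s c) \ {[]}).Finite := by
      rw [words_diff]
      exact Set.finite_iUnion fun i => (ih i).image _
    exact (this.union (Set.finite_singleton [])).subset (by intro w hw; by_cases h : w = [] <;> simp [h, hw])

lemma words_plane {S : Type} (T : ET S) : IsPlaneTree (words T) := by
  induction T with
  | node k s c ih =>
    refine ⟨words_nil _, fun w n h => ?_, fun w j n hj h => ?_⟩
    · cases w with
      | nil => exact words_nil _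
      | cons i u =>
        rw [List.cons_append, words_cons] at h
        obtain ⟨hi, hu⟩ := h
        exact words_cons.2 ⟨hi, (ih _).2.1 u n hu⟩
    · cases w with
      | nil =>
        rw [List.nil_append, words_cons] at h ⊢
        obtain ⟨hi, hu⟩ := h
        exact ⟨by omega, words_nil _⟩
      | cons i u =>
        rw [List.cons_append, words_cons] at h ⊢
        obtain ⟨hi, hu⟩ := h
        exact ⟨hi, (ih _).2.2 u j n hj hu⟩

lemma unit_vec (s : Stp d) : IsUnitStep (vec s) := by
  refine ⟨s.1, fun j hj => ?_, ?_⟩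
  · simp [vec, hj]
  · cases h : s.2 <;> simp [vec, h]

lemma exists_vec {v : Zd d} (h : IsUnitStep v) : ∃ s : Stp d, vec s = v := by
  obtain ⟨i, h1, h2⟩ := h
  rcases h2 with h2 | h2
  · refine ⟨(i, true), ?_⟩
    funext j
    by_cases hj : j = i
    · subst hj; simp [vec, h2]
    · simp [vec, hj, h1 j hj]
  · refine ⟨(i, false), ?_⟩
    funext j
    by_cases hj : j = i
    · subst hj; simp [vec, h2]
    · simp [vec, hj, h1 j hj]

lemma pos_emb (T : ET (Stp d)) (x : Zd d) : IsBRWEmbedding (words T) (pos T x) := by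
  induction T generalizing x with
  | node k s c ih =>
    intro w hw hne
    cases w with
    | nil => exact absurd rfl hne
    | cons i u =>
      obtain ⟨hi, hu⟩ := words_cons.1 hw
      rw [pos_cons x i hi]
      cases u with
      | nil =>
        simp only [List.dropLast_singleton, pos_nil]
        rw [add_sub_cancel_left]; exact unit_vec _
      | cons j u' =>
        rw [List.dropLast_cons_cons, pos_cons x i hi]
        exact ih _ _ _ hu (by simp)

lemma cc_nil {S : Type} (k : ℕ) (s : Fin k → S) (c : Fin k → ET S) : childCount (words (ET.node k s c)) [] = k := by
  unfold childCount
  have : {j : ℕ | [] ++ [j] ∈ words (ET.node k s c)} = ((Finset.range k : Finset ℕ) : Set ℕ) := by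
    ext j
    simp only [List.nil_append, mem_setOf_eq, words_cons, Finset.coe_range, mem_Iio]
    exact ⟨fun h => h.1, fun h => ⟨h, words_nil _⟩⟩
  rw [this, Set.ncard_coe_finset, Finset.card_range]

lemma cc_cons {S : Type} (k : ℕ) (s : Fin k → S) (c : Fin k → ET S) (i : Fin k) (u : List ℕ) :
    childCount (words (ET.node k s c)) (i.val :: u) = childCount (words (c i)) u := by
  unfold childCount
  congr 1
  ext j
  simp only [List.cons_append, mem_setOf_eq, words_cons]
  exact ⟨fun h => h.2, fun h => ⟨i.2, h⟩⟩

variable (p : PMF ℕ)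

lemma finprod_children (k : ℕ) (s : Fin k → Stp d) (c : Fin k → ET (Stp d)) :
    ∏ᶠ w ∈ words (ET.node k s c) \ {[]}, (c0 d * p (childCount (words (ET.node k s c)) w))
      = ∏ i, ∏ᶠ u ∈ words (c i), (c0 d * p (childCount (words (c i)) u)) := by
  rw [words_diff, finprod_mem_iUnion]
  · rw [finprod_eq_prod_of_fintype]
    refine Finset.prod_congr rfl fun i _ => ?_
    rw [finprod_mem_image]
    · simp_rw [cc_cons]
    · intro a _ b _ h; simpa using h
  · intro i j hij
    rw [Function.onFun, Set.disjoint_left]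
    rintro w ⟨u, _, rfl⟩ ⟨u', _, h⟩
    simp at h
    exact hij (Fin.ext h.1.symm)
  · intro i; exact (words_finite _).image _

lemma treeW_words (T : ET (Stp d)) :
    ∏ᶠ w ∈ words T, (c0 d * p (childCount (words T) w)) = c0 d * treeW p T := by
  induction T with
  | node k s c ih =>
    have h1 : words (ET.node k s c) = insert [] (words (ET.node k s c) \ {[]}) := by
      rw [Set.insert_diff_singleton, Set.insert_eq_of_mem (words_nil _)]
    have h2 : ∏ᶠ w ∈ insert [] (words (ET.node k s c) \ {[]}), (c0 d * p (childCount (words (ET.node k s c)) w))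
      = c0 d * treeW p (ET.node k s c) := by
      rw [finprod_mem_insert _ (by simp) ((words_finite _).diff), finprod_children, cc_nil]
      simp_rw [ih]
      simp only [treeW]; ring
    rw [← h2, ← h1]

lemma bw_words (T : ET (Stp d)) : bushWeight p (words T) * c0 d ^ ((words T).ncard - 1) = bw p T := by
  cases T with
  | node k s c =>
    have h1 := finprod_children p k s c
    simp_rw [treeW_words] at h1
    unfold bushWeight
    rw [cc_nil]
    simp only [bw]
    rw [← h1, mul_assoc]
    congr 1
    have hf : (words (ET.node k s c) \ {[]}).Finite := (words_finite _).diff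
    rw [finprod_mem_eq_finite_toFinset_prod _ hf, finprod_mem_eq_finite_toFinset_prod _ hf,
      Finset.prod_mul_distrib, Finset.prod_const, ← Set.ncard_eq_toFinset_card _ hf,
      Set.ncard_diff_singleton_of_mem (words_nil _)]
    ring

lemma exists_ET (n : ℕ) : ∀ (t : Set (List ℕ)) (g : List ℕ → Zd d), IsPlaneTree t → t.Finite → t.ncard ≤ n →
    IsBRWEmbedding t g → ∃ T : ET (Stp d), words T = t ∧ ∀ w ∈ t, pos T (g []) w = g w := by
  induction n with
  | zero =>
    intro t g ht hf hn
    have : t.ncard = 0 := by omega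
    rw [Set.ncard_eq_zero hf] at this
    exact absurd ht.1 (by simp [this])
  | succ n ih =>
    intro t g ht hf hn hg
    set A : Set ℕ := {j | [j] ∈ t} with hA
    have hAf : A.Finite := by
      refine Set.Finite.preimage (f := fun j : ℕ => [j]) (fun a _ b _ h => by simpa using h) hf
    obtain ⟨k, hk⟩ : ∃ k : ℕ, ∀ j, j ∈ A ↔ j < k := by
      obtain ⟨b, hb⟩ := hAf.bddAbove
      classical
      have hex : ∃ k, k ∉ A := ⟨b+1, fun h => by have := hb h; omega⟩
      refine ⟨Nat.find hex, fun j => ⟨fun hj => ?_, fun hj => ?_⟩⟩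
      · by_contra hcon
        exact Nat.find_spec hex (ht.2.2 [] _ j (not_lt.1 hcon) hj)
      · by_contra hcon
        exact absurd (Nat.find_min' hex hcon) (by omega)
    have hsub : ∀ i : Fin k, ∃ T : ET (Stp d), words T = {u | i.val :: u ∈ t} ∧
        ∀ u, i.val :: u ∈ t → pos T (g [i.val]) u = g (i.val :: u) := by
      intro i
      have hinj : Function.Injective (fun u : List ℕ => i.val :: u) := fun a b h => by simpa using h
      have hfi : {u | i.val :: u ∈ t}.Finite := Set.Finite.preimage (f := fun u => i.val :: u) hinj.injOn hf
      refine ih {u | i.val :: u ∈ t} (fun u => g (i.val :: u)) ⟨?_, ?_, ?_⟩ hfi ?_ ?_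
      · exact (hk i).2 i.2
      · intro w m h; exact ht.2.1 (i.val :: w) m h
      · intro w j m hj h; exact ht.2.2 (i.val :: w) j m hj h
      · have h1 : (fun u : List ℕ => i.val :: u) '' {u | i.val :: u ∈ t} ⊆ t \ {[]} := by
          rintro w ⟨u, hu, rfl⟩; exact ⟨hu, by simp⟩
        have h2 := Set.ncard_le_ncard h1 hf.diff
        rw [Set.ncard_image_of_injective _ hinj, Set.ncard_diff_singleton_of_mem ht.1] at h2
        omega
      · intro u hu hne
        have := hg (i.val :: u) hu (by simp)
        cases u with
        | nil => exact absurd rfl hne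
        | cons j u' => rwa [List.dropLast_cons_cons] at this
    choose c hc1 hc2 using hsub
    have hst : ∀ i : Fin k, ∃ s : Stp d, vec s = g [i.val] - g [] := by
      intro i
      exact exists_vec (by simpa using hg [i.val] ((hk i).2 i.2) (by simp))
    choose s hs using hst
    have hlt : ∀ i u, i :: u ∈ t → i < k := by
      intro i u hu
      rw [← hk]
      induction u using List.reverseRecOn with
      | nil => exact hu
      | append_singleton u a ih' => exact ih' (ht.2.1 (i :: u) a hu)
    refine ⟨ET.node k s c, ?_, ?_⟩
    · ext w
      cases w with
      | nil => exact ⟨fun _ => ht.1, fun _ => words_nil _⟩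
      | cons i u =>
        rw [words_cons]
        constructor
        · rintro ⟨h, hu⟩; rw [hc1] at hu; exact hu
        · intro h; exact ⟨hlt i u h, by rw [hc1]; exact h⟩
    · intro w hw
      cases w with
      | nil => rw [pos_nil]
      | cons i u =>
        have hi := hlt i u hw
        rw [pos_cons _ i hi, hs, add_sub_cancel]
        exact hc2 ⟨i, hi⟩ u hw

lemma occ_ge (h : ℕ) (T : ET (Stp d)) (x : Zd d) (w : List ℕ) (hw : w ∈ words T) (hl : w.length < h) :
    occ h T x (pos T x w) ≠ 0 := by
  induction h generalizing T x w with
  | zero => omega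
  | succ h ih =>
    cases T with
    | node k s c =>
      cases w with
      | nil => simp [occ, pos_nil, dl]
      | cons i u =>
        obtain ⟨hi, hu⟩ := words_cons.1 hw
        rw [pos_cons x i hi]
        have := ih (c ⟨i, hi⟩) (x + vec (s ⟨i, hi⟩)) u hu (by simpa using hl)
        simp only [occ]
        intro h0
        rw [add_eq_zero, Finset.sum_eq_zero_iff] at h0
        exact this (h0.2 ⟨i, hi⟩ (Finset.mem_univ _))

lemma occ_ne (h : ℕ) (T : ET (Stp d)) (x y : Zd d) (ho : occ h T x y ≠ 0) : ∃ w ∈ words T, pos T x w = y := by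
  induction h generalizing T x with
  | zero => simp [occ] at ho
  | succ h ih =>
    cases T with
    | node k s c =>
      by_cases hx : x = y
      · exact ⟨[], words_nil _, by rw [pos_nil, hx]⟩
      · simp only [occ, dl, hx, if_false, zero_add] at ho
        obtain ⟨i, -, hi⟩ := Finset.exists_ne_zero_of_sum_ne_zero ho
        obtain ⟨w, hw, hp⟩ := ih _ _ hi
        exact ⟨i.val :: w, words_cons.2 ⟨i.2, hw⟩, by rw [pos_cons x i i.2]; exact hp⟩

lemma bb_ne (h : ℕ) (T : ET (Stp d)) (x y : Zd d) (ho : bb h T x y ≠ 0) : ∃ w ∈ words T, pos T x w = y := by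
  cases T with
  | node k s c =>
    simp only [bb, fst1] at ho
    split_ifs at ho with hk
    · obtain ⟨w, hw, hp⟩ := occ_ne _ _ _ _ ho
      exact ⟨0 :: w, words_cons.2 ⟨hk, hw⟩, by rw [pos_cons x 0 hk]; exact hp⟩
    · exact absurd rfl ho
end

/-! #### The link with the model -/

section
variable {d : ℕ} {p : PMF ℕ}

lemma unit_neg {v : Zd d} (h : IsUnitStep v) : IsUnitStep (-v) := by
  obtain ⟨i, h1, h2⟩ := h
  refine ⟨i, fun j hj => by simp [h1 j hj], ?_⟩
  rcases h2 with h2 | h2 <;> simp [h2]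

lemma pre_succ {n : ℕ} (v : Fin n → HA d) (i : ℕ) (hi : i < n) :
    pre v (i+1) = pre v i + vec (v ⟨i, hi⟩).1 := by
  unfold pre
  have : ∀ j : Fin n, (if j.val < i + 1 then vec (v j).1 else 0)
      = (if j.val < i then vec (v j).1 else 0) + (if j = ⟨i, hi⟩ then vec (v j).1 else 0) := by
    intro j
    rcases lt_trichotomy j.val i with h | h | h
    · have h2 : j ≠ ⟨i, hi⟩ := fun h' => by rw [h'] at h; simp at h
      simp [h, h2, Nat.lt_succ_of_lt h]
    · have h2 : j = ⟨i, hi⟩ := Fin.ext h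
      subst h2; simp
    · have h2 : j ≠ ⟨i, hi⟩ := fun h' => by rw [h'] at h; simp at h
      have h3 : ¬ j.val < i := by omega
      have h4 : ¬ j.val < i + 1 := by omega
      simp [h2, h3, h4]
  simp_rw [this]
  rw [Finset.sum_add_distrib]
  simp

def TT {n : ℕ} (v : Fin n → HA d) (i : ℕ) : ET (Stp d) :=
  if h : i < n then (v ⟨i, h⟩).2 else ET.node 0 Fin.elim0 Fin.elim0

lemma TT_lt {n : ℕ} (v : Fin n → HA d) (i : Fin n) : TT v i.val = (v i).2 := by
  simp [TT]

def aa {n : ℕ} (v1 v2 : Fin n → HA d) : ℤ → Zd d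
  | Int.ofNat k => pre v2 k
  | Int.negSucc k => pre v1 (k+1)

def tt {n : ℕ} (v1 v2 : Fin n → HA d) : ℤ → ET (Stp d)
  | Int.ofNat k => TT v2 (k-1)
  | Int.negSucc k => TT v1 k

def FF (N : ℕ) : Finset ℤ :=
  (Finset.range N).image (fun i : ℕ => Int.ofNat (i+1)) ∪ (Finset.range N).image Int.negSucc

lemma mem_FF {N : ℕ} {m : ℤ} : m ∈ FF N ↔ (∃ i : Fin N, m = Int.ofNat (i.val+1)) ∨ ∃ i : Fin N, m = Int.negSucc i.val := by
  unfold FF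
  simp only [Finset.mem_union, Finset.mem_image, Finset.mem_range]
  constructor
  · rintro (⟨i, hi, rfl⟩ | ⟨i, hi, rfl⟩)
    · exact Or.inl ⟨⟨i, hi⟩, rfl⟩
    · exact Or.inr ⟨⟨i, hi⟩, rfl⟩
  · rintro (⟨i, rfl⟩ | ⟨i, rfl⟩)
    · exact Or.inl ⟨i, i.2, rfl⟩
    · exact Or.inr ⟨i, i.2, rfl⟩

lemma prod_FF {N : ℕ} (f : ℤ → ℝ≥0∞) : ∏ m ∈ FF N, f m
    = (∏ i : Fin N, f (Int.ofNat (i.val+1))) * ∏ i : Fin N, f (Int.negSucc i.val) := by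
  unfold FF
  rw [Finset.prod_union, Finset.prod_image, Finset.prod_image, Finset.prod_range, Finset.prod_range]
  · intro a _ b _ h; exact Int.negSucc.inj h
  · intro a _ b _ h; exact Nat.succ.inj (Int.ofNat.inj h)
  · rw [Finset.disjoint_left]
    intro m h1 h2
    simp only [Finset.mem_image] at h1 h2
    obtain ⟨i, _, rfl⟩ := h1
    obtain ⟨j, _, h⟩ := h2
    cases h

def Cyl (M : BiInfModel d p) {N : ℕ} (v1 v2 : Fin N → HA d) : Set M.Ω :=
  {ω | (∀ k : ℤ, -(N : ℤ) ≤ k → k ≤ (N : ℤ) → M.walk k ω = aa v1 v2 k) ∧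
        ∀ m ∈ FF N, M.btree m ω = words (tt v1 v2 m) ∧
          ∀ w ∈ words (tt v1 v2 m), M.bemb m ω w = pos (tt v1 v2 m) (aa v1 v2 m) w}

lemma aa_step {N : ℕ} (v1 v2 : Fin N → HA d) (k : ℤ) (h1 : -(N:ℤ) ≤ k) (h2 : k < N) :
    IsUnitStep (aa v1 v2 (k+1) - aa v1 v2 k) := by
  cases k with
  | ofNat k =>
    have hk : k < N := by simpa using h2
    show IsUnitStep (pre v2 (k+1) - pre v2 k)
    rw [pre_succ v2 k hk, add_sub_cancel_left]; exact unit_vec _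
  | negSucc k =>
    have hk : k < N := by omega
    have e : aa v1 v2 (Int.negSucc k + 1) = pre v1 k := by
      cases k with
      | zero => show pre v2 0 = pre v1 0; rw [pre_zero, pre_zero]
      | succ k => rfl
    rw [e]
    show IsUnitStep (pre v1 k - pre v1 (k+1))
    rw [pre_succ v1 k hk]
    have : pre v1 k - (pre v1 k + vec (v1 ⟨k, hk⟩).1) = - vec (v1 ⟨k, hk⟩).1 := by abel
    rw [this]; exact unit_neg (unit_vec _)

lemma wt_hwt {N : ℕ} (v : Fin N → HA d) : wt (hwt p) v = c0 d ^ N * ∏ i, bw p (v i).2 := by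
  unfold wt hwt
  rw [Finset.prod_mul_distrib]; simp

lemma cyl_law (M : BiInfModel d p) {N : ℕ} (v1 v2 : Fin N → HA d) :
    M.P (Cyl M v1 v2) = wt (hwt p) v1 * wt (hwt p) v2 := by
  have h := M.hlaw N (aa v1 v2) (pre_zero v2) (aa_step v1 v2) (FF N) ?_ (fun m => words (tt v1 v2 m))
    (fun m _ => ⟨words_plane _, words_finite _⟩) (fun m => pos (tt v1 v2 m) (aa v1 v2 m))
    (fun m _ => ⟨pos_nil _ _, pos_emb _ _⟩)
  · unfold Cyl
    rw [h]
    change c0 d ^ (2 * N) * ∏ m ∈ FF N, bushWeight p (words (tt v1 v2 m)) * c0 d ^ ((words (tt v1 v2 m)).ncard - 1) = _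
    simp_rw [bw_words]
    rw [prod_FF, wt_hwt, wt_hwt]
    have e1 : ∀ i : Fin N, tt v1 v2 (Int.ofNat (i.val+1)) = (v2 i).2 := fun i => TT_lt v2 i
    have e2 : ∀ i : Fin N, tt v1 v2 (Int.negSucc i.val) = (v1 i).2 := fun i => TT_lt v1 i
    simp_rw [e1, e2]
    ring
  · intro m hm
    rcases mem_FF.1 hm with ⟨i, rfl⟩ | ⟨i, rfl⟩
    · have := i.2; simp only [Int.ofNat_eq_natCast]; omega
    · have := i.2; omega

lemma cyl_fut (M : BiInfModel d p) {N : ℕ} (v1 v2 : Fin N → HA d) {ω : M.Ω} (h : ω ∈ Cyl M v1 v2) (i : Fin N) :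
    M.btree (Int.ofNat (i.val+1)) ω = words (v2 i).2 ∧
      ∀ w ∈ words (v2 i).2, M.bemb (Int.ofNat (i.val+1)) ω w = pos (v2 i).2 (pre v2 (i.val+1)) w := by
  have := h.2 _ (mem_FF.2 (Or.inl ⟨i, rfl⟩))
  have e1 : tt v1 v2 (Int.ofNat (i.val+1)) = (v2 i).2 := TT_lt v2 i
  rw [e1] at this
  exact this

lemma cyl_past (M : BiInfModel d p) {N : ℕ} (v1 v2 : Fin N → HA d) {ω : M.Ω} (h : ω ∈ Cyl M v1 v2) (i : Fin N) :
    M.btree (Int.negSucc i.val) ω = words (v1 i).2 ∧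
      ∀ w ∈ words (v1 i).2, M.bemb (Int.negSucc i.val) ω w = pos (v1 i).2 (pre v1 (i.val+1)) w := by
  have := h.2 _ (mem_FF.2 (Or.inr ⟨i, rfl⟩))
  have e1 : tt v1 v2 (Int.negSucc i.val) = (v1 i).2 := TT_lt v1 i
  rw [e1] at this
  exact this

lemma exists_cyl (M : BiInfModel d p) (N : ℕ) (ω : M.Ω) : ∃ v1 v2 : Fin N → HA d, ω ∈ Cyl M v1 v2 := by
  have hT : ∀ m : ℤ, ∃ T : ET (Stp d), words T = M.btree m ω ∧
      ∀ w ∈ M.btree m ω, pos T (M.walk m ω) w = M.bemb m ω w := by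
    intro m
    have := exists_ET (M.btree m ω).ncard (M.btree m ω) (M.bemb m ω) (M.hbtree m ω).1 (M.hbtree m ω).2 le_rfl (M.hbemb m ω)
    rwa [M.hbroot] at this
  choose T hT1 hT2 using hT
  have hs2 : ∀ i : ℕ, ∃ s : Stp d, vec s = M.walk (Int.ofNat (i+1)) ω - M.walk (Int.ofNat i) ω :=
    fun i => exists_vec (M.hstep (Int.ofNat i) ω)
  have hs1 : ∀ i : ℕ, ∃ s : Stp d, vec s = M.walk (Int.negSucc i) ω - M.walk (Int.negSucc i + 1) ω :=
    fun i => exists_vec (by rw [← neg_sub]; exact unit_neg (M.hstep (Int.negSucc i) ω))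
  choose s2 hs2 using hs2
  choose s1 hs1 using hs1
  let v2 : Fin N → HA d := fun i => (s2 i, T (Int.ofNat (i.val+1)))
  let v1 : Fin N → HA d := fun i => (s1 i, T (Int.negSucc i.val))
  have p2 : ∀ k : ℕ, k ≤ N → pre v2 k = M.walk (Int.ofNat k) ω := by
    intro k
    induction k with
    | zero => intro _; rw [pre_zero]; exact (M.hwalk0 ω).symm
    | succ k ih =>
      intro hk
      rw [pre_succ v2 k (by omega), ih (by omega)]
      show _ + vec (s2 k) = _
      rw [hs2]; abel
  have p1 : ∀ k : ℕ, k ≤ N → pre v1 k = M.walk (-(k:ℤ)) ω := by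
    intro k
    induction k with
    | zero => intro _; rw [pre_zero]; exact (M.hwalk0 ω).symm
    | succ k ih =>
      intro hk
      rw [pre_succ v1 k (by omega), ih (by omega)]
      show _ + vec (s1 k) = _
      rw [hs1]
      have e1 : Int.negSucc k = -((k+1 : ℕ):ℤ) := rfl
      have e2 : Int.negSucc k + 1 = -(k:ℤ) := by omega
      rw [e2, e1]; abel
  have hw : ∀ k : ℤ, -(N : ℤ) ≤ k → k ≤ (N : ℤ) → M.walk k ω = aa v1 v2 k := by
    intro k h1 h2
    cases k with
    | ofNat k => exact (p2 k (by simpa using h2)).symm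
    | negSucc k => exact (p1 (k+1) (by omega)).symm
  refine ⟨v1, v2, hw, ?_⟩
  intro m hm
  have ht : tt v1 v2 m = T m := by
    rcases mem_FF.1 hm with ⟨i, rfl⟩ | ⟨i, rfl⟩
    · exact TT_lt v2 i
    · exact TT_lt v1 i
  have hb : -(N : ℤ) ≤ m ∧ m ≤ (N : ℤ) := by
    rcases mem_FF.1 hm with ⟨i, rfl⟩ | ⟨i, rfl⟩
    · have := i.2; simp only [Int.ofNat_eq_natCast]; omega
    · have := i.2; omega
  rw [ht, hT1]
  refine ⟨rfl, fun w hw' => ?_⟩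
  rw [← hw m hb.1 hb.2, hT2 m w hw']

lemma P_le (M : BiInfModel d p) (N : ℕ) (E : Set M.Ω) (f : (Fin N → HA d) → (Fin N → HA d) → ℝ≥0∞)
    (hf : ∀ v1 v2 ω, ω ∈ E → ω ∈ Cyl M v1 v2 → 1 ≤ f v1 v2) :
    M.P E ≤ ∑' v1 : Fin N → HA d, ∑' v2 : Fin N → HA d, wt (hwt p) v1 * wt (hwt p) v2 * f v1 v2 := by
  let _ := M.mΩ
  have hsub : E ⊆ ⋃ v : (Fin N → HA d) × (Fin N → HA d), (E ∩ Cyl M v.1 v.2) := by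
    intro ω hω
    obtain ⟨v1, v2, h⟩ := exists_cyl M N ω
    exact mem_iUnion.2 ⟨(v1, v2), hω, h⟩
  calc M.P E ≤ M.P (⋃ v : (Fin N → HA d) × (Fin N → HA d), (E ∩ Cyl M v.1 v.2)) := measure_mono hsub
    _ ≤ ∑' v : (Fin N → HA d) × (Fin N → HA d), M.P (E ∩ Cyl M v.1 v.2) := measure_iUnion_le _
    _ ≤ ∑' v : (Fin N → HA d) × (Fin N → HA d), wt (hwt p) v.1 * wt (hwt p) v.2 * f v.1 v.2 := by
        refine ENNReal.tsum_le_tsum fun v => ?_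
        by_cases hne : (E ∩ Cyl M v.1 v.2).Nonempty
        · obtain ⟨ω, h1, h2⟩ := hne
          calc M.P (E ∩ Cyl M v.1 v.2) ≤ M.P (Cyl M v.1 v.2) := measure_mono inter_subset_right
            _ = wt (hwt p) v.1 * wt (hwt p) v.2 * 1 := by rw [cyl_law, mul_one]
            _ ≤ _ := by gcongr; exact hf _ _ ω h1 h2
        · rw [Set.not_nonempty_iff_eq_empty.1 hne, measure_empty]; exact zero_le
    _ = _ := by rw [ENNReal.tsum_prod']

lemma one_le_sq_bw (hd : 0 < d) (M : BiInfModel d p) : 1 ≤ ∑' T : ET (Stp d), bw p T := by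
  let _ := M.mΩ
  have _ := M.hP
  have h := P_le M 1 univ (fun _ _ => 1) (fun _ _ _ _ _ => le_rfl)
  rw [measure_univ] at h
  simp_rw [mul_one, ENNReal.tsum_mul_left, ENNReal.tsum_mul_right, iid0, pow_one, hwt_sum hd] at h
  by_contra hlt
  push Not at hlt
  have : (∑' T : ET (Stp d), bw p T) * (∑' T : ET (Stp d), bw p T) ≤ ∑' T : ET (Stp d), bw p T := by
    calc _ ≤ (∑' T : ET (Stp d), bw p T) * 1 := by gcongr
      _ = _ := mul_one _
  exact absurd (lt_of_le_of_lt (h.trans this) hlt) (lt_irrefl _)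

lemma qq_ne (hmean : ∑' k : ℕ, (k : ℝ≥0∞) * p k = 1) (hn : p 1 < 1) : qq p ≠ 0 := by
  intro h
  have h1 := sb_sum hmean
  rw [tsum_eq_zero_add' ENNReal.summable] at h1
  unfold qq at h
  have e : ∑' b : ℕ, ((b + 1 + 1 : ℕ) : ℝ≥0∞) * p (b + 1 + 1) = 0 := h
  rw [e] at h1
  simp at h1
  rw [h1] at hn
  exact lt_irrefl _ hn

lemma bw_pow (hd : 0 < d) : ∑' T : ET (Stp d), bw p T
    = ∑' k : ℕ, ((k + 1 : ℕ) : ℝ≥0∞) * p (k+1) * (∑' T : ET (Stp d), treeW p T) ^ k := by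
  rw [tsum_ET]
  refine tsum_congr fun k => ?_
  simp_rw [bw_node, ENNReal.tsum_mul_left]
  rw [iid0, sw_sum p hd]

lemma W_one (hd : 0 < d) (hmean : ∑' k : ℕ, (k : ℝ≥0∞) * p k = 1) (hn : p 1 < 1) (M : BiInfModel d p) :
    ∑' T : ET (Stp d), treeW p T = 1 := by
  have hq := qq_ne hmean hn
  have h1 := one_le_sq_bw hd M
  rw [bw_pow hd] at h1
  refine le_antisymm (treeW_sum_le p hd) ?_
  set W := ∑' T : ET (Stp d), treeW p T with hWdef
  have hW1 : W ≤ 1 := treeW_sum_le p hd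
  by_contra hlt
  push Not at hlt
  have hs := sb_sum hmean
  rw [tsum_eq_zero_add' ENNReal.summable] at h1 hs
  have hqf : qq p ≠ ⊤ := ne_top_of_le_ne_top ENNReal.one_ne_top (qq_le hmean)
  have hle : ∑' b : ℕ, ((b + 1 + 1 : ℕ) : ℝ≥0∞) * p (b + 1 + 1) * W ^ (b+1) ≤ qq p * W := by
    unfold qq
    rw [← ENNReal.tsum_mul_right]
    refine ENNReal.tsum_le_tsum fun k => ?_
    have : W ^ (k+1) ≤ W := by
      calc W ^ (k+1) = W ^ k * W := pow_succ _ _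
        _ ≤ 1 * W := by gcongr; exact pow_le_one₀ zero_le hW1
        _ = W := one_mul _
    gcongr
  have hlt2 : qq p * W < qq p := by
    calc qq p * W < qq p * 1 := ENNReal.mul_lt_mul_right hq hqf hlt
      _ = _ := mul_one _
  have e : ∑' b : ℕ, ((b + 1 + 1 : ℕ) : ℝ≥0∞) * p (b + 1 + 1) = qq p := rfl
  rw [e] at hs
  simp only [zero_add, pow_zero, mul_one] at h1 hs
  have hpf : ((1:ℕ):ℝ≥0∞) * p 1 ≠ ⊤ := by
    refine ne_top_of_le_ne_top ENNReal.one_ne_top ?_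
    rw [← hs]; exact le_self_add
  have := lt_of_le_of_lt (h1.trans (add_le_add_right hle _)) (ENNReal.add_lt_add_left hpf hlt2)
  rw [hs] at this
  exact lt_irrefl _ this

lemma conv_mean (h : HasMeanOne p) : ∑' k : ℕ, (k : ℝ≥0∞) * p k = 1 := by
  unfold HasMeanOne at h
  have hs : Summable fun k : ℕ => (k : ℝ) * (p k).toReal := by
    by_contra hcon
    rw [tsum_eq_zero_of_not_summable hcon] at h
    exact zero_ne_one h
  have h2 := ENNReal.ofReal_tsum_of_nonneg (fun k => mul_nonneg (Nat.cast_nonneg k) ENNReal.toReal_nonneg) hs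
  rw [h, ENNReal.ofReal_one] at h2
  rw [h2]
  refine tsum_congr fun k => ?_
  rw [ENNReal.ofReal_mul (Nat.cast_nonneg k), ENNReal.ofReal_natCast, ENNReal.ofReal_toReal (p.apply_ne_top k)]

lemma conv_m2 (h : FiniteSecondMoment p) : ∑' k : ℕ, (k : ℝ≥0∞)^2 * p k ≠ ⊤ := by
  unfold FiniteSecondMoment at h
  have h2 := ENNReal.ofReal_tsum_of_nonneg (fun k : ℕ => mul_nonneg (sq_nonneg (k:ℝ)) ENNReal.toReal_nonneg) h
  have : ∑' k : ℕ, (k : ℝ≥0∞)^2 * p k = ∑' k : ℕ, ENNReal.ofReal ((k : ℝ) ^ 2 * (p k).toReal) := by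
    refine tsum_congr fun k => ?_
    rw [ENNReal.ofReal_mul (sq_nonneg _), ENNReal.ofReal_pow (Nat.cast_nonneg k), ENNReal.ofReal_natCast,
      ENNReal.ofReal_toReal (p.apply_ne_top k)]
  rw [this, ← h2]
  exact ENNReal.ofReal_ne_top
end

/-! #### Final estimates -/

section
variable {d : ℕ} {p : PMF ℕ}

lemma occ_one (h : ℕ) (T : ET (Stp d)) (x : Zd d) (w : List ℕ) (hw : w ∈ words T) (hl : w.length < h) :
    1 ≤ occ h T x (pos T x w) := by
  induction h generalizing T x w with
  | zero => omega
  | succ h ih =>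
    cases T with
    | node k s c =>
      cases w with
      | nil => simp [occ, pos_nil, dl]
      | cons i u =>
        obtain ⟨hi, hu⟩ := words_cons.1 hw
        rw [pos_cons x i hi]
        have := ih (c ⟨i, hi⟩) (x + vec (s ⟨i, hi⟩)) u hu (by simpa using hl)
        simp only [occ]
        refine le_trans this (le_trans ?_ le_add_self)
        exact Finset.single_le_sum (f := fun j : Fin k => occ h (c j) (x + vec (s j)) (pos (c ⟨i, hi⟩) (x + vec (s ⟨i, hi⟩)) u))
          (fun _ _ => zero_le) (Finset.mem_univ (⟨i, hi⟩ : Fin k))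

lemma hocc_one (h r : ℕ) {N : ℕ} (v : Fin N → HA d) (i : Fin N) (hi : r ≤ i.val) (w : List ℕ)
    (hw : w ∈ words (v i).2) (hl : w.length < h) :
    1 ≤ hocc (fun T x => occ h T x (pos (v i).2 (pre v (i.val+1)) w)) r v 0 := by
  unfold hocc
  refine le_trans ?_ (Finset.single_le_sum (f := fun i' : Fin N => if r ≤ i'.val then
    occ h (v i').2 (0 + pre v (i'.val+1)) (pos (v i).2 (pre v (i.val+1)) w) else 0)
          (fun _ _ => zero_le) (Finset.mem_univ i))
  simp only [hi, if_true, zero_add]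
  exact occ_one h _ _ w hw hl

/-- Truncated intersection event. -/
def EN (M : BiInfModel d p) (r N : ℕ) : Set M.Ω :=
  {ω | ∃ i < N, ∃ j < N, r ≤ j ∧ ∃ w ∈ M.btree (Int.negSucc i) ω, ∃ u ∈ M.btree (Int.ofNat (j+1)) ω,
    w.length < N ∧ u.length < N ∧ M.bemb (Int.negSucc i) ω w = M.bemb (Int.ofNat (j+1)) ω u}

lemma EN_mono (M : BiInfModel d p) (r : ℕ) : Monotone (EN M r) := by
  intro N N' hN ω
  rintro ⟨i, hi, j, hj, hr, w, hw, u, hu, h1, h2, h3⟩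
  exact ⟨i, by omega, j, by omega, hr, w, hw, u, hu, by omega, by omega, h3⟩

lemma EN_le (M : BiInfModel d p) (r N : ℕ) : M.P (EN M r N) ≤
    ∑' v : Fin N → HA d, ∑' v' : Fin N → HA d, wt (hwt p) v * wt (hwt p) v' * XX (occ N) 0 r v v' := by
  refine P_le M N _ _ ?_
  rintro v1 v2 ω ⟨i, hi, j, hj, hr, w, hw, u, hu, h1, h2, h3⟩ hc
  obtain ⟨a1, a2⟩ := cyl_past M v1 v2 hc ⟨i, hi⟩
  obtain ⟨b1, b2⟩ := cyl_fut M v1 v2 hc ⟨j, hj⟩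
  simp only at a1 a2 b1 b2
  rw [a1] at hw
  rw [b1] at hu
  rw [a2 w hw, b2 u hu] at h3
  have q1 := hocc_one N 0 v1 ⟨i, hi⟩ (Nat.zero_le _) w hw h1
  have q2 := hocc_one N r v2 ⟨j, hj⟩ hr u hu h2
  simp only at q1 q2
  rw [← h3] at q2
  unfold XX
  refine le_trans ?_ (ENNReal.le_tsum (pos (v1 ⟨i, hi⟩).2 (pre v1 (i+1)) w))
  exact one_le_mul q1 q2

lemma event_sub (M : BiInfModel d p) (R : ℝ) (hR : 0 < R) :
    {ω | (⋃ n ∈ {n : ℤ | n < 0}, M.bushVerts n ω) ∩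
          (⋃ n ∈ {n : ℤ | R < (n : ℝ)}, M.bushVerts n ω) ≠ ∅} ⊆ ⋃ N, EN M ⌊R⌋₊ N := by
  intro ω hω
  simp only [mem_setOf_eq] at hω
  rw [← Set.nonempty_iff_ne_empty] at hω
  obtain ⟨y, hy1, hy2⟩ := hω
  simp only [mem_iUnion, mem_setOf_eq, BiInfModel.bushVerts, mem_image] at hy1 hy2
  obtain ⟨m, hm, w, hw, hwy⟩ := hy1
  obtain ⟨n, hn, u, hu, huy⟩ := hy2
  have hn0 : 0 < n := by
    have : (0:ℝ) < n := hR.trans hn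
    exact_mod_cast this
  obtain ⟨i, rfl⟩ : ∃ i : ℕ, m = Int.negSucc i := Int.eq_negSucc_of_lt_zero hm
  obtain ⟨j, rfl⟩ : ∃ j : ℕ, n = Int.ofNat (j+1) := ⟨(n-1).toNat, by simp only [Int.ofNat_eq_natCast]; omega⟩
  have hj : ⌊R⌋₊ ≤ j := by
    have : ⌊R⌋₊ < j + 1 := by
      rw [Nat.floor_lt hR.le]
      simpa using hn
    omega
  refine mem_iUnion.2 ⟨i + j + w.length + u.length + 1, i, by omega, j, by omega, hj, w, hw, u, hu, by omega, by omega, ?_⟩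
  rw [hwy, huy]

lemma final_I (hd : 9 ≤ d) (hmean : ∑' k : ℕ, (k : ℝ≥0∞) * p k = 1) (hm2 : ∑' k : ℕ, (k : ℝ≥0∞)^2 * p k ≠ ⊤)
    (hW : ∑' T : ET (Stp d), treeW p T = 1) (M : BiInfModel d p) :
    ∃ C : ℝ, ∀ R : ℝ, 0 < R →
      (M.P {ω | (⋃ n ∈ {n : ℤ | n < 0}, M.bushVerts n ω) ∩
          (⋃ n ∈ {n : ℤ | R < (n : ℝ)}, M.bushVerts n ω) ≠ ∅}).toReal
        ≤ C * Real.rpow R (-(((d : ℝ) - 8) / 2)) := by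
  let _ := M.mΩ
  obtain ⟨C, hC, h⟩ := partI hd hmean hm2 hW
  refine ⟨C, fun R hR => ?_⟩
  have hex : -(((d : ℝ) - 8) / 2) = 4 - (d:ℝ)/2 := by ring
  have h9 : (9:ℝ) ≤ d := by exact_mod_cast hd
  have hle : ((⌊R⌋₊:ℝ)+1)^(4-(d:ℝ)/2) ≤ Real.rpow R (-(((d : ℝ) - 8) / 2)) := by
    rw [hex]
    exact Real.rpow_le_rpow_of_nonpos hR (Nat.lt_floor_add_one R).le (by linarith)
  have hP : M.P {ω | (⋃ n ∈ {n : ℤ | n < 0}, M.bushVerts n ω) ∩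
          (⋃ n ∈ {n : ℤ | R < (n : ℝ)}, M.bushVerts n ω) ≠ ∅}
      ≤ ENNReal.ofReal (C*((⌊R⌋₊:ℝ)+1)^(4-(d:ℝ)/2)) := by
    refine (measure_mono (event_sub M R hR)).trans ?_
    rw [(EN_mono M ⌊R⌋₊).measure_iUnion]
    refine iSup_le fun N => ?_
    refine (measure_mono (EN_mono M _ (Nat.le_add_left N ⌊R⌋₊))).trans ?_
    exact (EN_le M _ _).trans (h _ _ (Nat.le_add_right _ _))
  refine (ENNReal.toReal_le_of_le_ofReal ?_ hP).trans ?_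
  · positivity
  · exact mul_le_mul_of_nonneg_left hle hC

lemma hocc_ne (b : ET (Stp d) → Zd d → ℝ≥0∞) (r : ℕ) {N : ℕ} (v : Fin N → HA d) (h : hocc b r v 0 ≠ 0) :
    ∃ i : Fin N, r ≤ i.val ∧ b (v i).2 (pre v (i.val+1)) ≠ 0 := by
  unfold hocc at h
  obtain ⟨i, -, hi⟩ := Finset.exists_ne_zero_of_sum_ne_zero h
  split_ifs at hi with hr
  · exact ⟨i, hr, by rwa [zero_add] at hi⟩
  · exact absurd rfl hi

def AL (M : BiInfModel d p) (L : ℕ) : Set M.Ω :=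
  {ω | 0 < M.piv 1 ω ∧ M.piv 1 ω ≤ L ∧ (⋃ n ∈ Set.Iic (M.piv 1 ω), M.bemb n ω '' M.btree n ω) ∩
        (⋃ n ∈ Set.Ici (M.piv 1 ω + 1), M.bemb n ω '' M.btree n ω) = ∅}

lemma AL_le (M : BiInfModel d p) (L : ℕ) : M.P (AL M L) ≤
    ∑' v : Fin (L+L) → HA d, ∑' v' : Fin (L+L) → HA d, wt (hwt p) v * wt (hwt p) v' *
      (if XX (bb L) L L v v' = 0 then 1 else 0) := by
  refine P_le M (L+L) _ (fun v v' => if XX (bb L) L L v v' = 0 then 1 else 0) ?_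
  rintro v1 v2 ω ⟨h0, hL, hdis⟩ hc
  have : XX (bb L) L L v1 v2 = 0 := by
    by_contra hne
    unfold XX at hne
    obtain ⟨y, hy⟩ : ∃ y, hocc (fun T x => bb L T x y) L v1 0 * hocc (fun T x => bb L T x y) L v2 0 ≠ 0 := by
      by_contra hcon
      push Not at hcon
      exact hne (by simp [hcon])
    obtain ⟨i, hi, hbi⟩ := hocc_ne _ _ _ (left_ne_zero_of_mul hy)
    obtain ⟨j, hj, hbj⟩ := hocc_ne _ _ _ (right_ne_zero_of_mul hy)
    obtain ⟨w, hw, hwy⟩ := bb_ne _ _ _ _ hbi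
    obtain ⟨u, hu, huy⟩ := bb_ne _ _ _ _ hbj
    obtain ⟨a1, a2⟩ := cyl_past M v1 v2 hc i
    obtain ⟨b1, b2⟩ := cyl_fut M v1 v2 hc j
    have : y ∈ (⋃ n ∈ Set.Iic (M.piv 1 ω), M.bemb n ω '' M.btree n ω) ∩
        (⋃ n ∈ Set.Ici (M.piv 1 ω + 1), M.bemb n ω '' M.btree n ω) := by
      constructor
      · refine mem_iUnion₂.2 ⟨Int.negSucc i.val, ?_, w, by rw [a1]; exact hw, by rw [a2 w hw, hwy]⟩
        show Int.negSucc i.val ≤ M.piv 1 ω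
        omega
      · refine mem_iUnion₂.2 ⟨Int.ofNat (j.val+1), ?_, u, by rw [b1]; exact hu, by rw [b2 u hu, huy]⟩
        show M.piv 1 ω + 1 ≤ Int.ofNat (j.val+1)
        simp only [Int.ofNat_eq_natCast]; omega
    rw [hdis] at this
    exact this
  simp [this]

lemma final_II (hd : 0 < d) (hd8 : d < 8) (hmean : ∑' k : ℕ, (k : ℝ≥0∞) * p k = 1)
    (hm2 : ∑' k : ℕ, (k : ℝ≥0∞)^2 * p k ≠ ⊤) (hq0 : qq p ≠ 0)
    (hW : ∑' T : ET (Stp d), treeW p T = 1) (M : BiInfModel d p) : False := by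
  let _ := M.mΩ
  have _ := M.hP
  obtain ⟨c, hc, h⟩ := partII hd hd8 hmean hm2 hq0 hW
  have hone : ∀ N : ℕ, ∑' v : Fin N → HA d, wt (hwt p) v = 1 := by
    intro N
    rw [iid0, hwt_sum hd, bw_sum hd hmean hW, one_pow]
  have hsum : ∀ L ≥ 1, M.P (AL M L) + c ≤ 1 := by
    intro L hL
    refine (add_le_add (AL_le M L) (h L hL)).trans ?_
    rw [← ENNReal.tsum_add]
    simp_rw [← ENNReal.tsum_add, ← mul_add]
    have : ∀ v v' : Fin (L+L) → HA d, ((if XX (bb L) L L v v' = 0 then (1:ℝ≥0∞) else 0) + (if XX (bb L) L L v v' = 0 then 0 else 1)) = 1 := by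
      intro v v'; split_ifs <;> simp
    simp_rw [this, mul_one, ENNReal.tsum_mul_left, hone, mul_one, hone]
    exact le_rfl
  have hmono : Monotone (AL M) := by
    intro L L' hLL ω
    rintro ⟨h1, h2, h3⟩
    exact ⟨h1, h2.trans (by exact_mod_cast hLL), h3⟩
  have hU : M.P (⋃ L, AL M L) = 1 := by
    have : (⋃ L, AL M L) =ᵐ[M.P] univ := by
      rw [eventuallyEq_univ]
      filter_upwards [M.hpiv] with ω hω
      obtain ⟨-, h2, -, h4, -⟩ := hω
      exact mem_iUnion.2 ⟨(M.piv 1 ω).toNat, h4, by omega, h2 1⟩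
    rw [measure_congr this, measure_univ]
  have hle : M.P (⋃ L, AL M L) + c ≤ 1 := by
    rw [hmono.measure_iUnion, ENNReal.iSup_add]
    refine iSup_le fun L => ?_
    refine (add_le_add_left (measure_mono (hmono (Nat.le_succ L))) c).trans ?_
    exact hsum (L+1) (by omega)
  rw [hU] at hle
  have : (1:ℝ≥0∞) < 1 + c := ENNReal.lt_add_right ENNReal.one_ne_top hc.ne'
  exact absurd (this.trans_le hle) (lt_irrefl _)
end

end BushPf

/-!
STATEMENT 12.  Fix `d ≥ 3` and assume `E[Z²] < ∞`.  There is `C < ∞` with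
`P^{-∞,∞}[ B(α((-∞,0))) ∩ B(α((R,∞))) ≠ ∅ ] ≤ C R^{-(d-8)/2}` for all `R > 0`.
-/
theorem intersection_of_two_sided_bushes
    (d : ℕ) (hd : 3 ≤ d) (p : PMF ℕ)
    (hmean : HasMeanOne p) (hnontriv : p 1 < 1)
    (hsq : FiniteSecondMoment p) (hvar : PosVariance p)
    (M : BiInfModel d p) :
    ∃ C : ℝ, ∀ R : ℝ, 0 < R →
      (M.P {ω | (⋃ n ∈ {n : ℤ | n < 0}, M.bushVerts n ω) ∩
          (⋃ n ∈ {n : ℤ | R < (n : ℝ)}, M.bushVerts n ω) ≠ ∅}).toReal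
        ≤ C * Real.rpow R (-(((d : ℝ) - 8) / 2)) := by
  have hm := BushPf.conv_mean hmean
  have hm2 := BushPf.conv_m2 hsq
  have hd0 : 0 < d := by omega
  have hW := BushPf.W_one hd0 hm hnontriv M
  rcases lt_trichotomy d 8 with h | h | h
  · exact (BushPf.final_II hd0 h hm hm2 (BushPf.qq_ne hm hnontriv) hW M).elim
  · refine ⟨1, fun R hR => ?_⟩
    have e : -(((d : ℝ) - 8) / 2) = 0 := by rw [h]; norm_num
    rw [e]
    have e2 : Real.rpow R 0 = 1 := Real.rpow_zero R
    rw [e2, mul_one]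
    let _ := M.mΩ
    have _ := M.hP
    exact ENNReal.toReal_le_of_le_ofReal zero_le_one (by rw [ENNReal.ofReal_one]; exact prob_le_one)
  · exact BushPf.final_I h hm hm2 hW M
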